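/- arXiv:1101.0013 — 2 statements merged into one kernel-verified Lean document; each statement's English description precedes it below -/
import Mathlib

section
/- Let n ≥ 2, 0 < σ < 1, and let B_r ⊂ ℝⁿ denote the open ball of radius r centered at the origin. Let u : ℝⁿ → ℝ be continuous, nonnegative on all of ℝⁿ, and integrable, and let ℱu denote its Fourier transform. Assume that the function ξ ↦ |ξ|^{2σ} ℱu(ξ) is integrable on ℝⁿ, and that there are bounded measurable functions a, b on B₁ such that for every x ∈ B₁ one has ∫_{ℝⁿ} |ξ|^{2σ} ℱu(ξ) e^{2πı⟨x,ξ⟩} dξ = a(x)u(x) + b(x) (i.e. (−Δ)^σ u = a u + b in B₁). Then there exists a constant C > 0 depending only on n, σ and the L^∞(B₁)-norm of a such that sup_{B_{1/2}} u ≤ C ( inf_{B_{1/2}} u + ‖b‖_{L^∞(B₁)} ). -/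
open MeasureTheory Metric Set Real
open scoped FourierTransform

section FractionalKernel

variable {E : Type*} [NormedAddCommGroup E] [InnerProductSpace ℝ E]

/-- The kernel `‖y‖ ^ (-(n + 2σ))` of the fractional Laplacian on an `n`-dimensional space. -/
noncomputable def fracKernel (σ : ℝ) (y : E) : ℝ :=
  ‖y‖ ^ (-(Module.finrank ℝ E + 2 * σ))

/-- The fractional kernel multiplied by `‖y‖ ^ 2` and cut off outside the unit ball. -/
noncomputable def nearKernel (σ : ℝ) : E → ℝ :=
  (ball 0 1).indicator fun y => ‖y‖ ^ 2 * fracKernel σ y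

/-- The fractional kernel cut off inside the unit ball. -/
noncomputable def farKernel (σ : ℝ) : E → ℝ :=
  (ball 0 1)ᶜ.indicator (fracKernel σ)

/-- The bounded weight `(1 + ‖y‖) ^ (-(n + 2σ))`. -/
noncomputable def fracWeight (σ : ℝ) (y : E) : ℝ :=
  (1 + ‖y‖) ^ (-(Module.finrank ℝ E + 2 * σ))

lemma fracKernel_nonneg (σ : ℝ) (y : E) : 0 ≤ fracKernel σ y :=
  rpow_nonneg (norm_nonneg y) _

lemma nearKernel_nonneg (σ : ℝ) (y : E) : 0 ≤ nearKernel σ y :=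
  indicator_nonneg (fun y _ => mul_nonneg (by positivity) (fracKernel_nonneg σ y)) y

lemma farKernel_nonneg (σ : ℝ) (y : E) : 0 ≤ farKernel σ y :=
  indicator_nonneg (fun y _ => fracKernel_nonneg σ y) y

lemma fracKernel_smul (σ : ℝ) {R : ℝ} (hR : 0 < R) (y : E) :
    fracKernel σ (R • y) = R ^ (-(Module.finrank ℝ E + 2 * σ)) * fracKernel σ y := by
  rw [fracKernel, fracKernel, norm_smul, norm_of_nonneg hR.le,
    mul_rpow hR.le (norm_nonneg y)]

variable [MeasurableSpace E] [BorelSpace E]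

lemma measurable_fracKernel (σ : ℝ) : Measurable (fracKernel σ : E → ℝ) :=
  measurable_norm.pow_const _

variable [FiniteDimensional ℝ E]

/-- Scaling of integrals against the fractional kernel. -/
lemma integral_mul_fracKernel_smul (σ : ℝ) {R : ℝ} (hR : 0 < R) (F : E → ℝ) :
    ∫ y, F (R • y) * fracKernel σ y = R ^ (2 * σ) * ∫ y, F y * fracKernel σ y := by
  have h := Measure.integral_comp_smul_of_nonneg (volume : Measure E)
    (fun y => F y * fracKernel σ y) R (hR := hR.le)
  have h1 : ∀ y : E, F (R • y) * fracKernel σ y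
      = R ^ (Module.finrank ℝ E + 2 * σ) * (F (R • y) * fracKernel σ (R • y)) := by
    intro y
    rw [fracKernel_smul σ hR, rpow_neg hR.le]
    have := (rpow_pos_of_pos hR (Module.finrank ℝ E + 2 * σ)).ne'
    field_simp
  simp_rw [h1]
  rw [integral_const_mul, h, smul_eq_mul, rpow_add hR, rpow_natCast]
  have := (pow_pos hR (Module.finrank ℝ E)).ne'
  field_simp

variable [Nontrivial E]

lemma integrable_farKernel {σ : ℝ} (hσ : 0 < σ) : Integrable (farKernel σ : E → ℝ) := by
  have h := (integrable_fun_norm_addHaar (volume : Measure E)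
    (f := (Ici (1 : ℝ)).indicator fun r => r ^ (-(Module.finrank ℝ E + 2 * σ)))).2 ?_
  · refine h.congr (Filter.Eventually.of_forall fun y => ?_)
    simp [farKernel, fracKernel, Set.indicator]
  · have hd : 1 ≤ Module.finrank ℝ E := Module.finrank_pos
    have h1 : IntegrableOn (fun t : ℝ => t ^ (-1 - 2 * σ)) (Ici 1) := by
      rw [integrableOn_Ici_iff_integrableOn_Ioi]
      exact integrableOn_Ioi_rpow_of_lt (by linarith) one_pos
    rw [← integrable_indicator_iff measurableSet_Ici] at h1
    refine h1.integrableOn.congr_fun (fun t ht => ?_) measurableSet_Ioi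
    by_cases h : t ∈ Ici (1 : ℝ)
    · simp only [indicator_of_mem h, smul_eq_mul]
      rw [← rpow_natCast, ← rpow_add ht]
      push_cast [hd]
      ring_nf
    · simp [indicator_of_notMem h]

lemma integrable_nearKernel {σ : ℝ} (hσ : σ < 1) : Integrable (nearKernel σ : E → ℝ) := by
  have h := (integrable_fun_norm_addHaar (volume : Measure E)
    (f := (Iio (1 : ℝ)).indicator
      fun r => r ^ 2 * r ^ (-(Module.finrank ℝ E + 2 * σ)))).2 ?_
  · refine h.congr (Filter.Eventually.of_forall fun y => ?_)
    simp [nearKernel, fracKernel, Set.indicator]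
  · have hd : 1 ≤ Module.finrank ℝ E := Module.finrank_pos
    have h1 : IntegrableOn (fun t : ℝ => t ^ (1 - 2 * σ)) (Ioo 0 1) := by
      rw [intervalIntegral.integrableOn_Ioo_rpow_iff one_pos]
      linarith
    rw [← integrable_indicator_iff measurableSet_Ioo] at h1
    refine h1.integrableOn.congr_fun (fun t ht => ?_) measurableSet_Ioi
    have ht' : (0 : ℝ) < t := ht
    by_cases h : t ∈ Iio (1 : ℝ)
    · rw [indicator_of_mem h, indicator_of_mem (show t ∈ Ioo (0 : ℝ) 1 from ⟨ht, h⟩), smul_eq_mul,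
        ← rpow_natCast, ← rpow_natCast, ← rpow_add ht', ← rpow_add ht']
      push_cast [hd]
      ring_nf
    · rw [indicator_of_notMem h, indicator_of_notMem (fun h' => h h'.2), smul_zero]

lemma integral_farKernel_pos {σ : ℝ} (hσ : 0 < σ) : 0 < ∫ y : E, farKernel σ y := by
  rw [integral_pos_iff_support_of_nonneg (farKernel_nonneg σ) (integrable_farKernel hσ)]
  have hopen : IsOpen (closedBall (0 : E) 1)ᶜ := isClosed_closedBall.isOpen_compl
  have hne : ((closedBall (0 : E) 1)ᶜ).Nonempty := by
    obtain ⟨x, hx⟩ := exists_norm_eq E (zero_le_two)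
    exact ⟨x, by simp [hx]⟩
  refine (hopen.measure_pos volume hne).trans_le (measure_mono fun y hy => ?_)
  have hy' : 1 < ‖y‖ := by simpa using hy
  have hmem : y ∈ (ball (0 : E) 1)ᶜ := by simpa using hy'.le
  rw [Function.mem_support, farKernel, indicator_of_mem hmem]
  exact (rpow_pos_of_pos (one_pos.trans hy') _).ne'

end FractionalKernel

section FourierSymbol

variable {E : Type*} [NormedAddCommGroup E] [InnerProductSpace ℝ E] [FiniteDimensional ℝ E]
  [MeasurableSpace E] [BorelSpace E]

/-- The symmetric second difference of `u` at `x` in the direction `y`. -/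
noncomputable def symmSecondDiff {V : Type*} [AddGroup V] (u : V → ℝ) (x y : V) : ℝ :=
  u x - (u (x + y) + u (x - y)) / 2

lemma integrable_one_sub_cos_mul_fracKernel [Nontrivial E] {σ : ℝ} (hσ0 : 0 < σ) (hσ1 : σ < 1)
    (ξ : E) :
    Integrable fun y : E => (1 - cos (2 * π * inner ℝ y ξ)) * fracKernel σ y := by
  have hdom : Integrable fun y : E =>
      2 * π ^ 2 * ‖ξ‖ ^ 2 * nearKernel σ y + 2 * farKernel σ y :=
    ((integrable_nearKernel hσ1).const_mul _).add ((integrable_farKernel hσ0).const_mul _)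
  refine hdom.mono' ?_ (Filter.Eventually.of_forall fun y => ?_)
  · exact ((by fun_prop : Measurable fun y : E => 1 - cos (2 * π * inner ℝ y ξ)).mul
      (measurable_fracKernel σ)).aestronglyMeasurable
  · have hk := fracKernel_nonneg σ y
    have h0 : 0 ≤ 1 - cos (2 * π * inner ℝ y ξ) := sub_nonneg.2 (cos_le_one _)
    rw [norm_of_nonneg (mul_nonneg h0 hk)]
    by_cases hy : y ∈ ball (0 : E) 1
    · have h1 : 1 - cos (2 * π * inner ℝ y ξ) ≤ 2 * π ^ 2 * ‖ξ‖ ^ 2 * ‖y‖ ^ 2 := by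
        have h2 := one_sub_sq_div_two_le_cos (x := 2 * π * inner ℝ y ξ)
        have h3 : (inner ℝ y ξ) ^ 2 ≤ (‖y‖ * ‖ξ‖) ^ 2 :=
          sq_le_sq' (neg_le_of_abs_le (abs_real_inner_le_norm y ξ)) (real_inner_le_norm y ξ)
        nlinarith [mul_le_mul_of_nonneg_left h3 (sq_nonneg π)]
      simp only [nearKernel, farKernel, indicator_of_mem hy,
        indicator_of_notMem (notMem_compl_iff.2 hy)]
      nlinarith [mul_le_mul_of_nonneg_right h1 hk]
    · simp only [nearKernel, farKernel, indicator_of_notMem hy,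
        indicator_of_mem (mem_compl hy)]
      nlinarith [mul_le_mul_of_nonneg_right
        (by linarith [neg_one_le_cos (2 * π * inner ℝ y ξ)] :
          1 - cos (2 * π * inner ℝ y ξ) ≤ 2) hk]

/-- The Fourier symbol of the singular integral with kernel `fracKernel σ` is a nonnegative
multiple of `‖ξ‖ ^ (2σ)`. -/
lemma exists_integral_one_sub_cos_mul_fracKernel [Nontrivial E] {σ : ℝ} (hσ0 : 0 < σ) :
    ∃ c : ℝ, 0 ≤ c ∧ ∀ ξ : E,
      ∫ y : E, (1 - cos (2 * π * inner ℝ y ξ)) * fracKernel σ y = c * ‖ξ‖ ^ (2 * σ) := by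
  obtain ⟨e, he⟩ := exists_norm_eq E zero_le_one
  refine ⟨∫ y : E, (1 - cos (2 * π * inner ℝ y e)) * fracKernel σ y,
    integral_nonneg fun y => mul_nonneg (sub_nonneg.2 (cos_le_one _)) (fracKernel_nonneg σ y),
    fun ξ => ?_⟩
  rcases eq_or_ne ξ 0 with rfl | hξ
  · simp [zero_rpow (by positivity : 2 * σ ≠ 0)]
  have hpos : 0 < ‖ξ‖ := norm_pos_iff.2 hξ
  have hnorm : ‖‖ξ‖ • e‖ = ‖ξ‖ := by simp [norm_smul, he]
  set T := (ℝ ∙ (‖ξ‖ • e - ξ))ᗮ.reflection with hT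
  have hTe : T (‖ξ‖ • e) = ξ := Submodule.reflection_sub hnorm
  have hrot : ∫ y : E, (1 - cos (2 * π * inner ℝ y ξ)) * fracKernel σ y
      = ∫ y : E, (1 - cos (2 * π * inner ℝ (‖ξ‖ • y) e)) * fracKernel σ y := by
    rw [← T.measurePreserving.integral_comp T.toHomeomorph.measurableEmbedding]
    refine integral_congr_ae (Filter.Eventually.of_forall fun y => ?_)
    have h1 : inner ℝ (T y) ξ = inner ℝ (‖ξ‖ • y) e := by
      conv_lhs => rw [← hTe]
      rw [T.inner_map_map, inner_smul_left, inner_smul_right]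
      simp
    simp only [h1, fracKernel, T.norm_map]
  rw [hrot, integral_mul_fracKernel_smul σ hpos
    (fun y => 1 - cos (2 * π * inner ℝ y e)), mul_comm]

lemma continuous_fourier_of_integrable {f : E → ℂ} (hf : Integrable f) : Continuous (𝓕 f) :=
  VectorFourier.fourierIntegral_continuous continuous_fourierChar
    (by simpa using continuous_inner) hf

/-- If `‖ξ‖ ^ s * 𝓕 f` is integrable for some `s ≥ 0`, so is `𝓕 f`. -/
lemma integrable_fourier_of_integrable_rpow_smul {f : E → ℂ} (hf : Integrable f) {s : ℝ}
    (hs : 0 ≤ s) (h : Integrable fun ξ : E => ‖ξ‖ ^ s • 𝓕 f ξ) : Integrable (𝓕 f) := by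
  have hcont := continuous_fourier_of_integrable hf
  have h1 : IntegrableOn (𝓕 f) (closedBall 0 1) :=
    hcont.continuousOn.integrableOn_compact (isCompact_closedBall 0 1)
  have h2 : IntegrableOn (𝓕 f) (closedBall 0 1)ᶜ := by
    refine Integrable.mono h.integrableOn hcont.aestronglyMeasurable ?_
    refine (ae_restrict_iff' measurableSet_closedBall.compl).2
      (Filter.Eventually.of_forall fun ξ hξ => ?_)
    have hξ' : 1 ≤ ‖ξ‖ := by
      have : 1 < ‖ξ‖ := by simpa using hξ
      exact this.le
    rw [norm_smul, norm_of_nonneg (by positivity)]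
    exact le_mul_of_one_le_left (norm_nonneg _) (one_le_rpow hξ' hs)
  simpa using h1.union h2

/-- Absolutely convergent singular integral representation of the fractional Laplacian. -/
lemma integral_symmSecondDiff_mul_fracKernel [Nontrivial E] {σ c : ℝ} (hσ0 : 0 < σ) (hσ1 : σ < 1)
    (hc : ∀ ξ : E,
      ∫ y : E, (1 - cos (2 * π * inner ℝ y ξ)) * fracKernel σ y = c * ‖ξ‖ ^ (2 * σ))
    {u : E → ℝ} (hu : Continuous u) (hui : Integrable u)
    (hF : Integrable fun ξ : E => ‖ξ‖ ^ (2 * σ) • 𝓕 (fun y => (u y : ℂ)) ξ) (x : E) :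
    Integrable (fun y => symmSecondDiff u x y * fracKernel σ y) ∧
      ((∫ y, symmSecondDiff u x y * fracKernel σ y : ℝ) : ℂ)
        = c * 𝓕⁻ (fun ξ => ‖ξ‖ ^ (2 * σ) • 𝓕 (fun y => (u y : ℂ)) ξ) x := by
  set v : E → ℂ := 𝓕 (fun y => (u y : ℂ)) with hv
  have huc : Integrable fun y => (u y : ℂ) := hui.ofReal
  have hvc : Continuous v := continuous_fourier_of_integrable huc
  have hvi : Integrable v :=
    integrable_fourier_of_integrable_rpow_smul huc (by positivity) hF
  have hexp_int : ∀ z : E, Integrable fun ξ : E =>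
      Complex.exp ((2 * π * inner ℝ ξ z : ℝ) * Complex.I) • v ξ := by
    intro z
    refine hvi.mono (Continuous.aestronglyMeasurable (by fun_prop))
      (Filter.Eventually.of_forall fun ξ => ?_)
    rw [norm_smul, Complex.norm_exp_ofReal_mul_I, one_mul]
  have hinv : ∀ z : E, (u z : ℂ)
      = ∫ ξ : E, Complex.exp ((2 * π * inner ℝ ξ z : ℝ) * Complex.I) • v ξ := by
    intro z
    rw [← Real.fourierInv_eq', hv]
    exact (congrFun ((Complex.continuous_ofReal.comp hu).fourierInv_fourier_eq huc hvi) z).symm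
  let H : E → E → ℂ := fun y ξ =>
    ((1 - cos (2 * π * inner ℝ y ξ)) * fracKernel σ y : ℝ) •
      (Complex.exp ((2 * π * inner ℝ ξ x : ℝ) * Complex.I) • v ξ)
  have hH_inner : ∀ y, ∫ ξ, H y ξ = ((symmSecondDiff u x y * fracKernel σ y : ℝ) : ℂ) := by
    intro y
    have h1 : ∀ ξ, H y ξ = (fracKernel σ y : ℂ) *
        (Complex.exp ((2 * π * inner ℝ ξ x : ℝ) * Complex.I) • v ξ
          - (Complex.exp ((2 * π * inner ℝ ξ (x + y) : ℝ) * Complex.I) • v ξ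
            + Complex.exp ((2 * π * inner ℝ ξ (x - y) : ℝ) * Complex.I) • v ξ) / 2) := by
      intro ξ
      have h2 : Complex.exp ((2 * π * inner ℝ ξ (x + y) : ℝ) * Complex.I)
          = Complex.exp ((2 * π * inner ℝ ξ x : ℝ) * Complex.I)
            * Complex.exp ((2 * π * inner ℝ ξ y : ℝ) * Complex.I) := by
        rw [← Complex.exp_add, inner_add_right]; push_cast; ring_nf
      have h3 : Complex.exp ((2 * π * inner ℝ ξ (x - y) : ℝ) * Complex.I)
          = Complex.exp ((2 * π * inner ℝ ξ x : ℝ) * Complex.I)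
            * Complex.exp (-(2 * π * inner ℝ ξ y : ℝ) * Complex.I) := by
        rw [← Complex.exp_add, inner_sub_right]; push_cast; ring_nf
      have h4 : ((cos (2 * π * inner ℝ y ξ) : ℝ) : ℂ)
          = (Complex.exp ((2 * π * inner ℝ ξ y : ℝ) * Complex.I)
            + Complex.exp (-(2 * π * inner ℝ ξ y : ℝ) * Complex.I)) / 2 := by
        rw [real_inner_comm, Complex.ofReal_cos, Complex.cos]
      simp only [H]
      rw [h2, h3, Complex.real_smul, Complex.ofReal_mul (1 - cos _), Complex.ofReal_sub,
        Complex.ofReal_one, h4]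
      simp only [smul_eq_mul]
      generalize Complex.exp ((2 * π * inner ℝ ξ x : ℝ) * Complex.I) = A,
        Complex.exp ((2 * π * inner ℝ ξ y : ℝ) * Complex.I) = B,
        Complex.exp (-(2 * π * inner ℝ ξ y : ℝ) * Complex.I) = B'
      ring
    simp_rw [h1]
    have hadd : Integrable fun ξ : E =>
        (Complex.exp ((2 * π * inner ℝ ξ (x + y) : ℝ) * Complex.I) • v ξ
          + Complex.exp ((2 * π * inner ℝ ξ (x - y) : ℝ) * Complex.I) • v ξ) / 2 :=
      ((hexp_int (x + y)).add (hexp_int (x - y))).div_const 2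
    rw [integral_const_mul, integral_sub (hexp_int x) hadd, integral_div,
      integral_add (hexp_int (x + y)) (hexp_int (x - y)), ← hinv, ← hinv, ← hinv, symmSecondDiff]
    push_cast
    ring
  have hHm : AEStronglyMeasurable (Function.uncurry H) (volume.prod volume) := by
    have hm1 : Measurable fun p : E × E =>
        (1 - cos (2 * π * inner ℝ p.1 p.2)) * fracKernel σ p.1 :=
      (Continuous.measurable (by fun_prop)).mul ((measurable_fracKernel σ).comp measurable_fst)
    have hm2 : Continuous fun p : E × E =>
        Complex.exp ((2 * π * inner ℝ p.2 x : ℝ) * Complex.I) • v p.2 := by fun_prop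
    exact (hm1.smul hm2.measurable).aestronglyMeasurable
  have hnormH : ∀ y ξ, ‖H y ξ‖ = (1 - cos (2 * π * inner ℝ y ξ)) * fracKernel σ y * ‖v ξ‖ := by
    intro y ξ
    simp only [H]
    rw [norm_smul, norm_smul, Complex.norm_exp_ofReal_mul_I, one_mul, norm_of_nonneg
      (mul_nonneg (sub_nonneg.2 (cos_le_one _)) (fracKernel_nonneg σ y))]
  have hHi : Integrable (Function.uncurry H) (volume.prod volume) := by
    rw [integrable_prod_iff' hHm]
    have hHξ : ∀ ξ, Integrable fun y => H y ξ := fun ξ =>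
      (integrable_one_sub_cos_mul_fracKernel hσ0 hσ1 ξ).smul_const
        (Complex.exp ((2 * π * inner ℝ ξ x : ℝ) * Complex.I) • v ξ)
    refine ⟨Filter.Eventually.of_forall hHξ, ?_⟩
    simp only [Function.uncurry_apply_pair, hnormH]
    simp_rw [integral_mul_const, hc]
    refine (hF.norm.const_mul c).congr (Filter.Eventually.of_forall fun ξ => ?_)
    simp only [norm_smul]
    rw [norm_of_nonneg (by positivity), mul_assoc]
  constructor
  · have h := hHi.integral_prod_left.re
    refine h.congr (Filter.Eventually.of_forall fun y => ?_)
    simp only [Function.uncurry_apply_pair]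
    rw [hH_inner]
    simp
  · rw [← integral_complex_ofReal]
    simp_rw [← hH_inner]
    rw [integral_integral_swap hHi, Real.fourierInv_eq', ← integral_const_mul]
    refine integral_congr_ae (Filter.Eventually.of_forall fun ξ => ?_)
    simp only [H]
    rw [integral_smul_const, hc]
    simp only [Complex.real_smul, smul_eq_mul]
    push_cast
    ring

end FourierSymbol

section WeightBounds

variable {E : Type*} [NormedAddCommGroup E] [InnerProductSpace ℝ E]

lemma rpow_neg_le_mul_rpow_neg {a b c p : ℝ} (ha : 0 < a) (hb : 0 ≤ b) (hc : 0 < c) (hp : 0 ≤ p)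
    (h : a ≤ c * b) : b ^ (-p) ≤ c ^ p * a ^ (-p) := by
  have h1 : b ^ (-p) = c ^ p * (c * b) ^ (-p) := by
    rw [mul_rpow hc.le hb, ← mul_assoc, ← rpow_add hc, add_neg_cancel, rpow_zero, one_mul]
  rw [h1]
  exact mul_le_mul_of_nonneg_left (rpow_le_rpow_of_nonpos ha h (neg_nonpos.2 hp))
    (rpow_nonneg hc.le p)

lemma fracWeight_nonneg (σ : ℝ) (y : E) : 0 ≤ fracWeight σ y :=
  rpow_nonneg (by positivity) _

lemma fracWeight_le_one {σ : ℝ} (hσ : 0 ≤ σ) (y : E) : fracWeight σ y ≤ 1 :=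
  rpow_le_one_of_one_le_of_nonpos (by linarith [norm_nonneg y]) (neg_nonpos.2 (by positivity))

lemma continuous_fracWeight (σ : ℝ) : Continuous (fracWeight σ : E → ℝ) :=
  (continuous_const.add continuous_norm).rpow_const
    fun y => Or.inl (add_pos_of_pos_of_nonneg one_pos (norm_nonneg y)).ne'

lemma fracWeight_neg (σ : ℝ) (y : E) : fracWeight σ (-y) = fracWeight σ y := by
  simp [fracWeight]

lemma fracWeight_le_fracKernel {σ : ℝ} (hσ : 0 ≤ σ) {y : E} (hy : y ≠ 0) :
    fracWeight σ y ≤ fracKernel σ y :=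
  rpow_le_rpow_of_nonpos (norm_pos_iff.2 hy) (by linarith) (neg_nonpos.2 (by positivity))

/-- The weight changes by at most a constant factor under translations of length at most `1`. -/
lemma fracWeight_le_two_rpow_mul {σ : ℝ} (hσ : 0 ≤ σ) {x y : E} (h : ‖x - y‖ ≤ 1) :
    fracWeight σ x ≤ 2 ^ (Module.finrank ℝ E + 2 * σ) * fracWeight σ y := by
  refine rpow_neg_le_mul_rpow_neg (by positivity) (by positivity) two_pos (by positivity) ?_
  have := norm_sub_le x (x - y)
  rw [sub_sub_cancel] at this
  linarith [norm_nonneg x]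

lemma fracKernel_le_mul_fracWeight {σ : ℝ} (hσ : 0 ≤ σ) {ρ : ℝ} (hρ0 : 0 < ρ) (hρ1 : ρ ≤ 1)
    {y : E} (hy : ρ ≤ ‖y‖) :
    fracKernel σ y ≤ (2 / ρ) ^ (Module.finrank ℝ E + 2 * σ) * fracWeight σ y := by
  refine rpow_neg_le_mul_rpow_neg (by positivity) (by positivity) (by positivity)
    (by positivity) ?_
  rw [div_mul_eq_mul_div, le_div_iff₀ hρ0]
  nlinarith [norm_nonneg y]

variable [MeasurableSpace E] [BorelSpace E] [FiniteDimensional ℝ E]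

lemma integrable_mul_fracWeight {σ : ℝ} (hσ : 0 ≤ σ) {u : E → ℝ} (hu : Integrable u) :
    Integrable fun y => u y * fracWeight σ y := by
  refine hu.mul_bdd (c := 1) (continuous_fracWeight σ).aestronglyMeasurable
    (Filter.Eventually.of_forall fun y => ?_)
  rw [norm_of_nonneg (fracWeight_nonneg σ y)]
  exact fracWeight_le_one hσ y

/-- Weighted integrals of symmetric averages around points of the unit ball are comparable to
the weighted integral around the origin. -/
lemma integral_average_mul_fracWeight {σ : ℝ} (hσ : 0 ≤ σ) {u : E → ℝ} (hu : Integrable u)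
    (hu0 : ∀ y, 0 ≤ u y) {x : E} (hx : ‖x‖ ≤ 1) :
    Integrable (fun y => (u (x + y) + u (x - y)) / 2 * fracWeight σ y) ∧
    ∫ y, u y * fracWeight σ y ≤ 2 ^ (Module.finrank ℝ E + 2 * σ)
      * ∫ y, (u (x + y) + u (x - y)) / 2 * fracWeight σ y ∧
    ∫ y, (u (x + y) + u (x - y)) / 2 * fracWeight σ y
      ≤ 2 ^ (Module.finrank ℝ E + 2 * σ) * ∫ y, u y * fracWeight σ y := by
  have hadd : Integrable fun y => u (x + y) * fracWeight σ y :=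
    integrable_mul_fracWeight hσ (hu.comp_add_left x)
  have hsub : Integrable fun y => u (x - y) * fracWeight σ y :=
    integrable_mul_fracWeight hσ (hu.comp_sub_left x)
  have hsymm : ∫ y, u (x - y) * fracWeight σ y = ∫ y, u (x + y) * fracWeight σ y := by
    rw [← integral_neg_eq_self]
    simp only [sub_neg_eq_add, fracWeight_neg]
  have hsplit : (fun y => (u (x + y) + u (x - y)) / 2 * fracWeight σ y)
      = fun y => 1 / 2 * (u (x + y) * fracWeight σ y) + 1 / 2 * (u (x - y) * fracWeight σ y) := by
    funext y; ring
  have hint : ∫ y, (u (x + y) + u (x - y)) / 2 * fracWeight σ y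
      = ∫ y, u (x + y) * fracWeight σ y := by
    rw [hsplit, integral_add (hadd.const_mul _) (hsub.const_mul _), integral_const_mul,
      integral_const_mul, hsymm]
    ring
  have htrans : ∫ y, u y * fracWeight σ y = ∫ y, u (x + y) * fracWeight σ (x + y) :=
    (integral_add_left_eq_self (fun y => u y * fracWeight σ y) x).symm
  have hshift : Integrable fun y => u (x + y) * fracWeight σ (x + y) :=
    (integrable_mul_fracWeight hσ hu).comp_add_left x
  refine ⟨hsplit ▸ (hadd.const_mul _).add (hsub.const_mul _), ?_, ?_⟩
  · rw [hint, htrans, ← integral_const_mul]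
    refine integral_mono hshift (hadd.const_mul _) fun y => ?_
    have h1 := fracWeight_le_two_rpow_mul hσ (x := x + y) (y := y) (by simpa using hx)
    have h2 := mul_le_mul_of_nonneg_left h1 (hu0 (x + y))
    simp only
    linarith
  · rw [hint, htrans, ← integral_const_mul]
    refine integral_mono hadd (hshift.const_mul _) fun y => ?_
    have h1 := fracWeight_le_two_rpow_mul hσ (x := y) (y := x + y) (by simpa using hx)
    have h2 := mul_le_mul_of_nonneg_left h1 (hu0 (x + y))
    simp only
    linarith

end WeightBounds

section Touching

variable {E : Type*} [NormedAddCommGroup E] [InnerProductSpace ℝ E] [FiniteDimensional ℝ E]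
  [MeasurableSpace E] [BorelSpace E] [Nontrivial E]

/-- If a nonnegative function is touched from below at `x` by a paraboloid, its weighted integral
is controlled by its value and its fractional Laplacian at `x`. -/
lemma integral_mul_fracWeight_le_of_symmSecondDiff_le {σ : ℝ} (hσ0 : 0 < σ) (hσ1 : σ < 1)
    {u : E → ℝ} (hu : Integrable u) (hu0 : ∀ y, 0 ≤ u y) {x : E} (hx : ‖x‖ ≤ 1)
    (hD : Integrable fun y => symmSecondDiff u x y * fracKernel σ y) {s : ℝ} (hs : 0 ≤ s)
    (h : ∀ y, symmSecondDiff u x y ≤ s * ‖y‖ ^ 2) :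
    ∫ y, u y * fracWeight σ y ≤ 2 ^ (Module.finrank ℝ E + 2 * σ) *
      (s * (∫ y : E, nearKernel σ y)
        + u x * (volume.real (ball (0 : E) 1) + ∫ y : E, farKernel σ y)
        - ∫ y, symmSecondDiff u x y * fracKernel σ y) := by
  obtain ⟨havg, hle, -⟩ := integral_average_mul_fracWeight hσ0.le hu hu0 hx
  refine hle.trans (mul_le_mul_of_nonneg_left ?_ (by positivity))
  have hind : Integrable ((ball (0 : E) 1).indicator fun _ => (1 : ℝ)) :=
    (integrable_indicator_iff measurableSet_ball).2 (integrableOn_const measure_ball_lt_top.ne)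
  have hnear := (integrable_nearKernel (E := E) hσ1).const_mul s
  have hfar : Integrable fun y : E =>
      u x * ((ball (0 : E) 1).indicator (fun _ => (1 : ℝ)) y + farKernel σ y) :=
    (hind.add (integrable_farKernel hσ0)).const_mul (u x)
  have hsum : Integrable fun y : E => s * nearKernel σ y
      + u x * ((ball (0 : E) 1).indicator (fun _ => (1 : ℝ)) y + farKernel σ y) := hnear.add hfar
  have hval : ∫ y, (s * nearKernel σ y + u x * ((ball (0 : E) 1).indicator (fun _ => (1 : ℝ)) y
        + farKernel σ y) - symmSecondDiff u x y * fracKernel σ y)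
      = s * (∫ y : E, nearKernel σ y)
        + u x * (volume.real (ball (0 : E) 1) + ∫ y : E, farKernel σ y)
        - ∫ y, symmSecondDiff u x y * fracKernel σ y := by
    rw [integral_sub hsum hD, integral_add hnear hfar, integral_const_mul,
      integral_const_mul, integral_add hind (integrable_farKernel hσ0),
      integral_indicator_const _ measurableSet_ball, smul_eq_mul, mul_one]
  rw [← hval]
  refine integral_mono_ae havg (hsum.sub hD) ?_
  filter_upwards [compl_mem_ae_iff.2 (measure_singleton (0 : E))] with y hy
  have hwk := fracWeight_le_fracKernel hσ0.le (y := y) (by simpa using hy)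
  have hw0 := fracWeight_nonneg σ y
  have hw1 := fracWeight_le_one hσ0.le y
  have hy1 := h y
  have hdef : (u (x + y) + u (x - y)) / 2 = u x - symmSecondDiff u x y := by
    rw [symmSecondDiff]; ring
  have hnn : 0 ≤ u x - symmSecondDiff u x y := by
    rw [← hdef]; linarith [hu0 (x + y), hu0 (x - y)]
  have hux := hu0 x
  simp only [hdef]
  by_cases hy' : y ∈ ball (0 : E) 1
  · simp only [nearKernel, farKernel, indicator_of_mem hy',
      indicator_of_notMem (notMem_compl_iff.2 hy')]
    have hgap : 0 ≤ s * ‖y‖ ^ 2 - symmSecondDiff u x y := by linarith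
    nlinarith [mul_le_mul_of_nonneg_left hwk hgap, mul_le_mul_of_nonneg_left hw1 hux,
      mul_nonneg (mul_nonneg hs (sq_nonneg ‖y‖)) hw0]
  · simp only [nearKernel, farKernel, indicator_of_notMem hy', indicator_of_mem (mem_compl hy')]
    nlinarith [mul_le_mul_of_nonneg_left hwk hnn]

/-- If `u` is touched from above at `x` by a paraboloid on a ball of radius `ρ`, its fractional
Laplacian at `x` is bounded below in terms of `u x` and its weighted integral. -/
lemma le_integral_symmSecondDiff_of_le {σ : ℝ} (hσ0 : 0 < σ) (hσ1 : σ < 1)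
    {u : E → ℝ} (hu : Integrable u) (hu0 : ∀ y, 0 ≤ u y) {x : E} (hx : ‖x‖ ≤ 1)
    (hD : Integrable fun y => symmSecondDiff u x y * fracKernel σ y) {s ρ : ℝ} (hρ0 : 0 < ρ)
    (hρ1 : ρ ≤ 1) (h : ∀ y, ‖y‖ < ρ → -(s * ‖y‖ ^ 2) ≤ symmSecondDiff u x y) :
    u x * (∫ y : E, farKernel σ y) - s * ρ ^ 2 * (∫ y : E, nearKernel σ y)
      ≤ ρ ^ (2 * σ) * ((∫ y, symmSecondDiff u x y * fracKernel σ y)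
        + (2 / ρ) ^ (Module.finrank ℝ E + 2 * σ) * (2 ^ (Module.finrank ℝ E + 2 * σ)
          * ∫ y, u y * fracWeight σ y)) := by
  obtain ⟨havg, -, hle⟩ := integral_average_mul_fracWeight hσ0.le hu hu0 hx
  set p : ℝ := Module.finrank ℝ E + 2 * σ with hp
  let F : E → ℝ := fun y => if ‖y‖ < ρ then -(s * ‖y‖ ^ 2) else u x
  have hFscale : ∀ y, F (ρ • y) * fracKernel σ y
      = u x * farKernel σ y - s * ρ ^ 2 * nearKernel σ y := by
    intro y
    have hiff : ‖ρ • y‖ < ρ ↔ y ∈ ball (0 : E) 1 := by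
      rw [norm_smul, norm_of_nonneg hρ0.le, mem_ball_zero_iff, mul_lt_iff_lt_one_right hρ0]
    by_cases hy : y ∈ ball (0 : E) 1
    · simp only [F, if_pos (hiff.2 hy), nearKernel, farKernel, indicator_of_mem hy,
        indicator_of_notMem (notMem_compl_iff.2 hy), norm_smul, norm_of_nonneg hρ0.le]
      ring
    · simp only [F, if_neg (hiff.not.2 hy), nearKernel, farKernel, indicator_of_notMem hy,
        indicator_of_mem (mem_compl hy)]
      ring
  have hfar := (integrable_farKernel (E := E) hσ0).const_mul (u x)
  have hnear := (integrable_nearKernel (E := E) hσ1).const_mul (s * ρ ^ 2)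
  have hFint : Integrable fun y => F y * fracKernel σ y := by
    refine (integrable_comp_smul_iff volume _ hρ0.ne').1 ?_
    refine ((hfar.sub hnear).const_mul (ρ ^ (-p))).congr (Filter.Eventually.of_forall fun y => ?_)
    simp only [Pi.sub_apply]
    rw [← hFscale, fracKernel_smul σ hρ0]
    ring
  have hFval : u x * (∫ y : E, farKernel σ y) - s * ρ ^ 2 * (∫ y : E, nearKernel σ y)
      = ρ ^ (2 * σ) * ∫ y, F y * fracKernel σ y := by
    rw [← integral_mul_fracKernel_smul σ hρ0]
    simp_rw [hFscale]
    rw [integral_sub hfar hnear, integral_const_mul, integral_const_mul]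
  rw [hFval]
  refine mul_le_mul_of_nonneg_left ?_ (by positivity)
  refine le_trans ?_ (add_le_add_right (mul_le_mul_of_nonneg_left hle
    (by positivity : 0 ≤ (2 / ρ) ^ p)) _)
  rw [← integral_const_mul, ← integral_add hD (havg.const_mul _)]
  refine integral_mono hFint (hD.add (havg.const_mul _)) fun y => ?_
  have hk := fracKernel_nonneg σ y
  have hav : 0 ≤ (u (x + y) + u (x - y)) / 2 := by linarith [hu0 (x + y), hu0 (x - y)]
  simp only
  by_cases hy : ‖y‖ < ρ
  · simp only [F, if_pos hy]
    have h1 := mul_le_mul_of_nonneg_right (h y hy) hk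
    have h2 : 0 ≤ (2 / ρ) ^ p * ((u (x + y) + u (x - y)) / 2 * fracWeight σ y) :=
      mul_nonneg (by positivity) (mul_nonneg hav (fracWeight_nonneg σ y))
    linarith
  · simp only [F, if_neg hy]
    have h1 := mul_le_mul_of_nonneg_left
      (fracKernel_le_mul_fracWeight hσ0.le hρ0 hρ1 (not_lt.1 hy)) hav
    rw [symmSecondDiff]
    rw [← hp] at h1
    linarith

end Touching

section Paraboloid

variable {E : Type*} [NormedAddCommGroup E] [InnerProductSpace ℝ E]

lemma norm_add_sq_add_norm_sub_sq (x y : E) :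
    ‖x + y‖ ^ 2 + ‖x - y‖ ^ 2 = 2 * ‖x‖ ^ 2 + 2 * ‖y‖ ^ 2 := by
  linarith [parallelogram_law_with_norm ℝ x y, sq ‖x + y‖, sq ‖x - y‖, sq ‖x‖, sq ‖y‖]

variable [FiniteDimensional ℝ E]

/-- A point where a nonnegative continuous function is touched from above by a paraboloid of
controlled opening, at a controlled scale. -/
lemma exists_touching_paraboloid {n : ℕ} (hn0 : n ≠ 0) {u : E → ℝ} (hu : Continuous u)
    (hu0 : ∀ x, 0 ≤ u x) {x₁ : E} (hx₁' : ‖x₁‖ < 1 / 2) (hpos : 0 < u x₁) :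
    ∃ (x : E) (r : ℝ), 0 < r ∧ r ≤ 1 ∧ ‖x‖ < 3 / 4 ∧
      (1 / 4) ^ n * u x₁ ≤ (2 * r) ^ n * u x ∧
      ∀ y, ‖y‖ ≤ r / 2 → -(2 ^ (n + 2) * u x / r ^ 2 * ‖y‖ ^ 2) ≤ symmSecondDiff u x y := by
  obtain ⟨x₀, hx₀, hmax⟩ := (isCompact_closedBall (0 : E) (3 / 4)).exists_isMaxOn
    ⟨0, by simp; norm_num⟩ (f := fun z => (3 / 4 - ‖z‖) ^ n * u z) (by fun_prop)
  set d := 3 / 4 - ‖x₀‖ with hd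
  have hd_nonneg : 0 ≤ d := by
    have : ‖x₀‖ ≤ 3 / 4 := by simpa using hx₀
    linarith
  have hweight : (1 / 4) ^ n * u x₁ ≤ d ^ n * u x₀ := by
    have h1 : (3 / 4 - ‖x₁‖) ^ n * u x₁ ≤ d ^ n * u x₀ :=
      hmax (show x₁ ∈ closedBall (0 : E) (3 / 4) by simpa using by linarith)
    refine le_trans (mul_le_mul_of_nonneg_right ?_ hpos.le) h1
    exact pow_le_pow_left₀ (by norm_num) (by linarith) n
  have hd0 : 0 < d := by
    refine hd_nonneg.lt_of_ne fun h => ?_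
    rw [← h, zero_pow hn0, zero_mul] at hweight
    have : 0 < (1 / 4) ^ n * u x₁ := by positivity
    linarith
  have hu₀ : 0 < u x₀ := by
    have : 0 < d ^ n * u x₀ := lt_of_lt_of_le (by positivity) hweight
    exact pos_of_mul_pos_right this (by positivity)
  set r := d / 2 with hr
  have hr0 : 0 < r := by positivity
  have hr1 : r ≤ 1 := by linarith [norm_nonneg x₀]
  have hnorm : ∀ z ∈ closedBall x₀ r, ‖z‖ ≤ 3 / 4 - r := by
    intro z hz
    have hz' : ‖z - x₀‖ ≤ r := by simpa [dist_eq_norm] using hz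
    linarith [norm_le_insert' z x₀]
  have hdouble : ∀ z ∈ closedBall x₀ r, u z ≤ 2 ^ n * u x₀ := by
    intro z hz
    have hz1 := hnorm z hz
    have h1 : (3 / 4 - ‖z‖) ^ n * u z ≤ d ^ n * u x₀ :=
      hmax (show z ∈ closedBall (0 : E) (3 / 4) by simpa using by linarith)
    have h2 : r ^ n ≤ (3 / 4 - ‖z‖) ^ n := pow_le_pow_left₀ hr0.le (by linarith) n
    have h3 : r ^ n * u z ≤ r ^ n * (2 ^ n * u x₀) := by
      calc r ^ n * u z ≤ (3 / 4 - ‖z‖) ^ n * u z := mul_le_mul_of_nonneg_right h2 (hu0 z)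
        _ ≤ d ^ n * u x₀ := h1
        _ = r ^ n * (2 ^ n * u x₀) := by rw [← mul_assoc, ← mul_pow, hr]; ring_nf
    exact le_of_mul_le_mul_left h3 (by positivity)
  set s := 2 ^ (n + 2) * u x₀ / r ^ 2 with hs
  have hs0 : 0 < s := by positivity
  obtain ⟨x, hx, hxmax⟩ := (isCompact_closedBall x₀ r).exists_isMaxOn
    ⟨x₀, by simp [hr0.le]⟩ (f := fun z => u z - s * ‖z - x₀‖ ^ 2) (by fun_prop)
  have hxx₀ : u x₀ ≤ u x - s * ‖x - x₀‖ ^ 2 := by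
    have : u x₀ - s * ‖x₀ - x₀‖ ^ 2 ≤ u x - s * ‖x - x₀‖ ^ 2 := hxmax (by simp [hr0.le])
    simpa using this
  have hux₀ : u x₀ ≤ u x := by nlinarith [mul_nonneg hs0.le (sq_nonneg ‖x - x₀‖)]
  have hxclose : ‖x - x₀‖ ≤ r / 2 := by
    have h1 : s * ‖x - x₀‖ ^ 2 ≤ s * (r / 2) ^ 2 := by
      have h2 : s * (r / 2) ^ 2 = 2 ^ n * u x₀ := by
        rw [hs, pow_add]; field_simp
      rw [h2]
      linarith [hdouble x hx]
    exact (pow_le_pow_iff_left₀ (norm_nonneg _) (by positivity) two_ne_zero).1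
      (le_of_mul_le_mul_left h1 hs0)
  refine ⟨x, r, hr0, hr1, by linarith [hnorm x hx], ?_, fun y hy => ?_⟩
  · have h2r : 2 * r = d := by rw [hr]; ring
    rw [h2r]
    exact hweight.trans (mul_le_mul_of_nonneg_left hux₀ (by positivity))
  · have hmem1 : x + y ∈ closedBall x₀ r := by
      rw [mem_closedBall, dist_eq_norm, add_sub_right_comm]
      linarith [norm_add_le (x - x₀) y]
    have hmem2 : x - y ∈ closedBall x₀ r := by
      rw [mem_closedBall, dist_eq_norm, sub_right_comm]
      linarith [norm_sub_le (x - x₀) y]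
    have h1 : u (x + y) - s * ‖x + y - x₀‖ ^ 2 ≤ u x - s * ‖x - x₀‖ ^ 2 := hxmax hmem1
    have h2 : u (x - y) - s * ‖x - y - x₀‖ ^ 2 ≤ u x - s * ‖x - x₀‖ ^ 2 := hxmax hmem2
    have h3 := norm_add_sq_add_norm_sub_sq (x - x₀) y
    rw [add_sub_right_comm] at h1
    rw [sub_right_comm] at h2
    have h4 := congrArg (s * ·) h3
    have h5 : s * ‖y‖ ^ 2 ≤ 2 ^ (n + 2) * u x / r ^ 2 * ‖y‖ ^ 2 := by
      rw [hs]; gcongr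
    rw [symmSecondDiff]
    linarith

end Paraboloid

section Harnack

variable {E : Type*} [NormedAddCommGroup E] [InnerProductSpace ℝ E] [FiniteDimensional ℝ E]
  [MeasurableSpace E] [BorelSpace E] [Nontrivial E]

/-- `u` satisfies `|(-Δ)^σ u| ≤ A u + B` in the unit ball, where the (unnormalized) fractional
Laplacian is an absolutely convergent singular integral. -/
def FracLaplacianBound (σ A B : ℝ) (u : E → ℝ) : Prop :=
  ∀ x ∈ ball (0 : E) 1, Integrable (fun y => symmSecondDiff u x y * fracKernel σ y) ∧
    |∫ y, symmSecondDiff u x y * fracKernel σ y| ≤ A * u x + B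

/-- Weak Harnack inequality: the weighted integral is controlled by the infimum. -/
lemma exists_integral_mul_fracWeight_le {σ A : ℝ} (hσ0 : 0 < σ) (hσ1 : σ < 1) (hA : 0 ≤ A) :
    ∃ C > 0, ∀ (u : E → ℝ) (B : ℝ), Continuous u → (∀ x, 0 ≤ u x) → Integrable u → 0 ≤ B →
      FracLaplacianBound σ A B u → ∀ y ∈ ball (0 : E) (1 / 2),
        ∫ z, u z * fracWeight σ z ≤ C * (u y + B) := by
  set near := ∫ y : E, nearKernel σ y with hnear
  set far := volume.real (ball (0 : E) 1) + ∫ y : E, farKernel σ y with hfar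
  have hnear0 : 0 ≤ near := integral_nonneg (nearKernel_nonneg σ)
  have hfar0 : 0 ≤ far := add_nonneg measureReal_nonneg (integral_nonneg (farKernel_nonneg σ))
  set P : ℝ := 2 ^ (Module.finrank ℝ E + 2 * σ) with hP
  have hP0 : 0 < P := by positivity
  refine ⟨P * (4 * near + 2 * far + 2 * A + 1), by positivity,
    fun u B hu hu0 hui hB hL y hy => ?_⟩
  have hy' : ‖y‖ < 1 / 2 := by simpa using hy
  have hm := hu0 y
  obtain ⟨x, hx, hmin⟩ := (isCompact_closedBall (0 : E) (3 / 4)).exists_isMinOn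
    ⟨0, by simp; norm_num⟩ (f := fun z => u z + 4 * u y * ‖z‖ ^ 2) (by fun_prop)
  have hx' : ‖x‖ ≤ 3 / 4 := by simpa using hx
  have hxy : u x + 4 * u y * ‖x‖ ^ 2 ≤ u y + 4 * u y * ‖y‖ ^ 2 :=
    hmin (show y ∈ closedBall (0 : E) (3 / 4) by simpa using by linarith)
  have hy2 : ‖y‖ ^ 2 ≤ 1 / 4 := by nlinarith [norm_nonneg y]
  have hux : u x + 4 * u y * ‖x‖ ^ 2 ≤ 2 * u y := by
    nlinarith [mul_le_mul_of_nonneg_left hy2 hm]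
  have htouch : ∀ z, u x + 4 * u y * ‖x‖ ^ 2 - 4 * u y * ‖z‖ ^ 2 ≤ u z := by
    intro z
    by_cases hz : z ∈ closedBall (0 : E) (3 / 4)
    · have : u x + 4 * u y * ‖x‖ ^ 2 ≤ u z + 4 * u y * ‖z‖ ^ 2 := hmin hz
      linarith
    · have hz1 : 3 / 4 < ‖z‖ := by simpa using hz
      have hz2 : 1 / 2 ≤ ‖z‖ ^ 2 := by nlinarith
      nlinarith [mul_le_mul_of_nonneg_left hz2 hm, hu0 z]
  have hD : ∀ z, symmSecondDiff u x z ≤ 4 * u y * ‖z‖ ^ 2 := by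
    intro z
    rw [symmSecondDiff]
    nlinarith [htouch (x + z), htouch (x - z), norm_add_sq_add_norm_sub_sq x z]
  obtain ⟨hint, hbound⟩ := hL x (by simpa using by linarith)
  have hmain := integral_mul_fracWeight_le_of_symmSecondDiff_le hσ0 hσ1 hui hu0
    (by linarith : ‖x‖ ≤ 1) hint (by positivity) hD
  refine hmain.trans ?_
  rw [mul_assoc P]
  refine mul_le_mul_of_nonneg_left ?_ hP0.le
  have hux' : u x ≤ 2 * u y := by nlinarith [mul_nonneg hm (sq_nonneg ‖x‖)]
  have h1 := neg_le_of_abs_le hbound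
  have h2 := mul_le_mul_of_nonneg_left hux' hA
  have h3 := mul_le_mul_of_nonneg_right hux' hfar0
  have h4 : 0 ≤ (4 * near + 2 * far + 2 * A) * B := by positivity
  rw [← hnear, ← hfar]
  nlinarith

lemma exists_small_radius {σ a b c κ : ℝ} (hσ0 : 0 < σ) (hκ : 0 < κ) (hc : 0 < c) :
    ∃ θ > 0, θ ≤ c ∧ a * θ ^ 2 ≤ κ ∧ b * θ ^ (2 * σ) ≤ κ := by
  have h1 : Filter.Tendsto (fun θ : ℝ => a * θ ^ 2) (nhdsWithin 0 (Ioi 0)) (nhds 0) := by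
    have : Continuous fun θ : ℝ => a * θ ^ 2 := by fun_prop
    simpa using (this.tendsto 0).mono_left nhdsWithin_le_nhds
  have h2 : Filter.Tendsto (fun θ : ℝ => b * θ ^ (2 * σ)) (nhdsWithin 0 (Ioi 0)) (nhds 0) := by
    have : Continuous fun θ : ℝ => b * θ ^ (2 * σ) :=
      continuous_const.mul (continuous_rpow_const (by positivity))
    simpa [zero_rpow (by positivity : 2 * σ ≠ 0)] using
      (this.tendsto 0).mono_left nhdsWithin_le_nhds
  obtain ⟨θ, ⟨⟨hθ1, hθ2⟩, hθ3⟩, hθ4⟩ := (((h1.eventually_le_const hκ).and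
    (h2.eventually_le_const hκ)).and (Ioc_mem_nhdsGT hc)).and self_mem_nhdsWithin |>.exists
  exact ⟨θ, hθ4, hθ3.2, hθ1, hθ2⟩

/-- Local boundedness: the supremum is controlled by the weighted integral. -/
lemma exists_le_integral_mul_fracWeight {σ A : ℝ} (hσ0 : 0 < σ) (hσ1 : σ < 1) (hA : 0 ≤ A) :
    ∃ C > 0, ∀ (u : E → ℝ) (B : ℝ), Continuous u → (∀ x, 0 ≤ u x) → Integrable u → 0 ≤ B →
      FracLaplacianBound σ A B u → ∀ x ∈ ball (0 : E) (1 / 2),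
        u x ≤ C * ((∫ z, u z * fracWeight σ z) + B) := by
  set near := ∫ y : E, nearKernel σ y with hnear
  set κ := ∫ y : E, farKernel σ y with hκ
  have hnear0 : 0 ≤ near := integral_nonneg (nearKernel_nonneg σ)
  have hκ0 : 0 < κ := integral_farKernel_pos hσ0
  set n := Module.finrank ℝ E with hn
  have hn0 : n ≠ 0 := Module.finrank_pos.ne'
  obtain ⟨θ, hθ0, hθ1, hθnear, hθA⟩ := exists_small_radius (σ := σ) (a := 2 ^ (n + 2) * near)
    (b := A) hσ0 (by positivity : 0 < κ / 4) (by norm_num : (0 : ℝ) < 1 / 2)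
  refine ⟨(8 / θ) ^ n * (4 / κ) * 4 ^ (n + 2 * σ), by positivity,
    fun u B hu hu0 hui hB hL x₁ hx₁ => ?_⟩
  set N := ∫ z, u z * fracWeight σ z with hN
  have hN0 : 0 ≤ N := integral_nonneg fun z => mul_nonneg (hu0 z) (fracWeight_nonneg σ z)
  rcases (hu0 x₁).eq_or_lt with hzero | hpos
  · rw [← hzero]; positivity
  obtain ⟨x, r, hr0, hr1, hxnorm, hweight, hD⟩ :=
    exists_touching_paraboloid hn0 hu hu0 (by simpa using hx₁) hpos
  set ρ := θ * r with hρ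
  have hρ0 : 0 < ρ := by positivity
  have hρr : ρ ≤ r / 2 := by nlinarith
  have hρθ : ρ ≤ θ := mul_le_of_le_one_right hθ0.le hr1
  have hρ1 : ρ ≤ 1 := by linarith
  obtain ⟨hint, hbound⟩ := hL x (by simpa using by linarith)
  have hmain := le_integral_symmSecondDiff_of_le hσ0 hσ1 hui hu0 (by linarith : ‖x‖ ≤ 1) hint
    hρ0 hρ1 fun y hy => hD y (hy.le.trans hρr)
  rw [← hκ, ← hnear, ← hN, ← hn, mul_add] at hmain
  have hnear_le : 2 ^ (n + 2) * u x / r ^ 2 * ρ ^ 2 * near ≤ u x * (κ / 4) := by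
    have h1 : 2 ^ (n + 2) * u x / r ^ 2 * ρ ^ 2 * near
        = u x * (2 ^ (n + 2) * near * θ ^ 2) := by
      rw [hρ]; field_simp
    rw [h1]
    exact mul_le_mul_of_nonneg_left hθnear (hu0 x)
  have hρσ : ρ ^ (2 * σ) ≤ θ ^ (2 * σ) := rpow_le_rpow hρ0.le hρθ (by positivity)
  have hρσ1 : ρ ^ (2 * σ) ≤ 1 := rpow_le_one hρ0.le hρ1 (by positivity)
  have hint_le : ρ ^ (2 * σ) * (∫ y, symmSecondDiff u x y * fracKernel σ y)
      ≤ u x * (κ / 4) + B := by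
    calc ρ ^ (2 * σ) * (∫ y, symmSecondDiff u x y * fracKernel σ y)
        ≤ ρ ^ (2 * σ) * (A * u x + B) :=
          mul_le_mul_of_nonneg_left ((le_abs_self _).trans hbound) (by positivity)
      _ = u x * (A * ρ ^ (2 * σ)) + ρ ^ (2 * σ) * B := by ring
      _ ≤ u x * (κ / 4) + 1 * B := by
          refine add_le_add (mul_le_mul_of_nonneg_left ?_ (hu0 x))
            (mul_le_mul_of_nonneg_right hρσ1 hB)
          exact (mul_le_mul_of_nonneg_left hρσ hA).trans hθA
      _ = u x * (κ / 4) + B := by rw [one_mul]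
  have hscale : ρ ^ n * (ρ ^ (2 * σ) * ((2 / ρ) ^ (n + 2 * σ) * (2 ^ (n + 2 * σ) * N)))
      = 4 ^ (n + 2 * σ) * N := by
    have h4 : (4 : ℝ) ^ (n + 2 * σ) = 2 ^ (n + 2 * σ) * 2 ^ (n + 2 * σ) := by
      rw [← mul_rpow two_pos.le two_pos.le]; norm_num
    rw [div_rpow two_pos.le hρ0.le, h4, rpow_add hρ0, rpow_natCast]
    field_simp
  have hρn : ρ ^ n ≤ 1 := pow_le_one₀ hρ0.le hρ1
  have hupper : ρ ^ n * u x ≤ 4 / κ * (B + 4 ^ (n + 2 * σ) * N) := by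
    have h1 : u x * (κ / 4)
        ≤ B + ρ ^ (2 * σ) * ((2 / ρ) ^ (n + 2 * σ) * (2 ^ (n + 2 * σ) * N)) := by
      have : 0 ≤ u x * (κ / 4) := by have := hu0 x; positivity
      linarith
    have h2 := mul_le_mul_of_nonneg_left h1 (by positivity : 0 ≤ ρ ^ n)
    rw [mul_add, hscale] at h2
    have h3 : ρ ^ n * B ≤ B := mul_le_of_le_one_left hB hρn
    rw [div_mul_eq_mul_div, le_div_iff₀ hκ0]
    linarith
  have h4p : (1 : ℝ) ≤ 4 ^ (n + 2 * σ) := one_le_rpow (by norm_num) (by positivity)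
  calc u x₁ = 4 ^ n * ((1 / 4) ^ n * u x₁) := by
        rw [← mul_assoc, ← mul_pow]; norm_num
    _ ≤ 4 ^ n * ((2 * r) ^ n * u x) := mul_le_mul_of_nonneg_left hweight (by positivity)
    _ = (8 / θ) ^ n * (ρ ^ n * u x) := by
        rw [← mul_assoc, ← mul_assoc, ← mul_pow, ← mul_pow, hρ]
        congr 2
        field_simp
        norm_num
    _ ≤ (8 / θ) ^ n * (4 / κ * (B + 4 ^ (n + 2 * σ) * N)) := by gcongr
    _ ≤ (8 / θ) ^ n * (4 / κ * (4 ^ (n + 2 * σ) * B + 4 ^ (n + 2 * σ) * N)) := by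
        gcongr
        exact le_mul_of_one_le_left hB h4p
    _ = (8 / θ) ^ n * (4 / κ) * 4 ^ (n + 2 * σ) * (N + B) := by ring

/-- Harnack inequality for the singular integral form of the fractional Laplacian. -/
lemma exists_harnack_of_fracLaplacianBound {σ A : ℝ} (hσ0 : 0 < σ) (hσ1 : σ < 1) (hA : 0 ≤ A) :
    ∃ C > 0, ∀ (u : E → ℝ) (B : ℝ), Continuous u → (∀ x, 0 ≤ u x) → Integrable u → 0 ≤ B →
      FracLaplacianBound σ A B u → ∀ x ∈ ball (0 : E) (1 / 2), ∀ y ∈ ball (0 : E) (1 / 2),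
        u x ≤ C * (u y + B) := by
  obtain ⟨C₁, hC₁, hlower⟩ := exists_integral_mul_fracWeight_le (E := E) hσ0 hσ1 hA
  obtain ⟨C₂, hC₂, hupper⟩ := exists_le_integral_mul_fracWeight (E := E) hσ0 hσ1 hA
  refine ⟨C₂ * (C₁ + 1), by positivity, fun u B hu hu0 hui hB hL x hx y hy => ?_⟩
  have h1 := hlower u B hu hu0 hui hB hL y hy
  have h2 := hupper u B hu hu0 hui hB hL x hx
  refine h2.trans ?_
  rw [mul_assoc]
  refine mul_le_mul_of_nonneg_left ?_ hC₂.le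
  linarith [hu0 y]

end Harnack

/-- **Harnack inequality for the fractional Laplacian with lower order terms**
(Theorem 1.1). If `u ≥ 0` on all of `ℝⁿ` solves `(−Δ)^σ u = a u + b` in `B₁`
(realized via the Fourier transform and its inverse), with `a, b` bounded
measurable on `B₁`, then `sup_{B_{1/2}} u ≤ C (inf_{B_{1/2}} u + ‖b‖_{L^∞(B₁)})`,
where `C` depends only on `n`, `σ` and `‖a‖_{L^∞(B₁)}`. -/
theorem fractional_harnack_fourier
    (n : ℕ) (hn : 2 ≤ n) (σ : ℝ) (hσ0 : 0 < σ) (hσ1 : σ < 1) (Ma : ℝ) :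
    ∃ C > 0, ∀ (u a b : EuclideanSpace ℝ (Fin n) → ℝ) (Mb : ℝ),
      Continuous u → (∀ x, 0 ≤ u x) → Integrable u →
      Integrable (fun ξ : EuclideanSpace ℝ (Fin n) =>
        ‖ξ‖ ^ (2 * σ) • 𝓕 (fun y => (u y : ℂ)) ξ) →
      Measurable a → Measurable b →
      (∀ x ∈ ball (0 : EuclideanSpace ℝ (Fin n)) 1, |a x| ≤ Ma) →
      (∀ x ∈ ball (0 : EuclideanSpace ℝ (Fin n)) 1, |b x| ≤ Mb) →
      (∀ x ∈ ball (0 : EuclideanSpace ℝ (Fin n)) 1,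
        𝓕⁻ (fun ξ => ‖ξ‖ ^ (2 * σ) • 𝓕 (fun y => (u y : ℂ)) ξ) x
          = ((a x * u x + b x : ℝ) : ℂ)) →
      ∀ x ∈ ball (0 : EuclideanSpace ℝ (Fin n)) (1/2),
        ∀ y ∈ ball (0 : EuclideanSpace ℝ (Fin n)) (1/2),
          u x ≤ C * (u y + Mb) := by
  have : Nonempty (Fin n) := ⟨⟨0, by omega⟩⟩
  obtain ⟨c, hc0, hc⟩ := exists_integral_one_sub_cos_mul_fracKernel
    (E := EuclideanSpace ℝ (Fin n)) hσ0
  obtain ⟨C, hC, hharnack⟩ := exists_harnack_of_fracLaplacianBound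
    (E := EuclideanSpace ℝ (Fin n)) hσ0 hσ1 (by positivity : 0 ≤ c * |Ma|)
  refine ⟨C * (c + 1), by positivity, fun u a b Mb hu hu0 hui hF _ _ ha hb heq x hx y hy => ?_⟩
  have hMb : 0 ≤ Mb := (abs_nonneg _).trans (hb 0 (by simp))
  have hL : FracLaplacianBound σ (c * |Ma|) (c * Mb) u := by
    intro z hz
    obtain ⟨hint, hval⟩ := integral_symmSecondDiff_mul_fracKernel hσ0 hσ1 hc hu hui hF z
    refine ⟨hint, ?_⟩
    rw [heq z hz, ← Complex.ofReal_mul, Complex.ofReal_inj] at hval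
    rw [hval, abs_mul, abs_of_nonneg hc0, mul_assoc, ← mul_add]
    refine mul_le_mul_of_nonneg_left ((abs_add_le _ _).trans (add_le_add ?_ (hb z hz))) hc0
    rw [abs_mul, abs_of_nonneg (hu0 z)]
    exact mul_le_mul_of_nonneg_right ((ha z hz).trans (le_abs_self Ma)) (hu0 z)
  refine (hharnack u (c * Mb) hu hu0 hui (by positivity) hL x hx y hy).trans ?_
  rw [mul_assoc]
  refine mul_le_mul_of_nonneg_left ?_ hC.le
  linarith [mul_nonneg hc0 (hu0 y)]
end

section
/- Let n ≥ 2 and 0 < σ < 1. Let U : ℝⁿ × ℝ → ℝ be a nonnegative function of class C²(Q₁) ∩ C¹(Q̄₁) with ∫_{Q₁} t^{1−2σ}(U² + |∇U|²) dX < ∞, satisfying div(t^{1−2σ} ∇U(X)) = 0 pointwise in Q₁, and such that for every x ∈ B₁ the limit −lim_{t→0⁺} t^{1−2σ} ∂_t U(x,t) exists and equals a(x)U(x,0) + b(x), where a, b are bounded measurable functions on B₁. Then there exists C > 0 depending only on n, σ and ‖a‖_{L^∞(B₁)} such that sup_{Q̄_{1/2}} U ≤ C ( inf_{Q̄_{1/2}}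 U + ‖b‖_{L^∞(B₁)} ). -/
open MeasureTheory Metric Set Real

noncomputable section

/-- Points of `ℝ^{n+1}` written as `X = (x, t)` with `x ∈ ℝⁿ`, `t ∈ ℝ`. -/
abbrev Pt (n : ℕ) := EuclideanSpace ℝ (Fin n) × ℝ

/-- The box `Q_R = B_R × (0, R) ⊂ ℝ^{n+1}`. -/
def Q (n : ℕ) (R : ℝ) : Set (Pt n) :=
  (ball (0 : EuclideanSpace ℝ (Fin n)) R) ×ˢ (Ioo (0 : ℝ) R)

/-- The Laplacian of `U : ℝ^{n+1} → ℝ` at `X`, as the sum of the pure second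
directional derivatives along the standard orthonormal basis of `ℝⁿ × ℝ`. -/
def lap (n : ℕ) (U : Pt n → ℝ) (X : Pt n) : ℝ :=
  (∑ i : Fin n, iteratedFDeriv ℝ 2 U X
      ![((EuclideanSpace.single i (1 : ℝ)), (0 : ℝ)),
        ((EuclideanSpace.single i (1 : ℝ)), (0 : ℝ))]) +
    iteratedFDeriv ℝ 2 U X
      ![((0 : EuclideanSpace ℝ (Fin n)), (1 : ℝ)),
        ((0 : EuclideanSpace ℝ (Fin n)), (1 : ℝ))]

section Harnack

open Filter Topology

/-- `g` is twice differentiable at `x`, with first derivative `p` and second derivative `d`. -/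
def HasSecondDerivAt (g : ℝ → ℝ) (x p d : ℝ) : Prop :=
  ∃ g' : ℝ → ℝ, (∀ᶠ s in 𝓝 x, HasDerivAt g (g' s) s) ∧ g' x = p ∧ HasDerivAt g' d x

namespace HasSecondDerivAt

variable {f g φ : ℝ → ℝ} {x p d p₁ d₁ : ℝ}

lemma hasDerivAt (h : HasSecondDerivAt g x p d) : HasDerivAt g p x := by
  obtain ⟨g', h1, rfl, -⟩ := h
  exact h1.self_of_nhds

lemma congr_of_eventuallyEq (h : HasSecondDerivAt g x p d) (hfg : f =ᶠ[𝓝 x] g) :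
    HasSecondDerivAt f x p d := by
  obtain ⟨g', h1, h2, h3⟩ := h
  refine ⟨g', ?_, h2, h3⟩
  filter_upwards [h1, hfg.eventuallyEq_nhds] with s hs hs'
  exact hs.congr_of_eventuallyEq hs'

lemma congr_val (h : HasSecondDerivAt g x p d) (hp : p = p₁) (hd : d = d₁) :
    HasSecondDerivAt g x p₁ d₁ := hp ▸ hd ▸ h

lemma const (c x : ℝ) : HasSecondDerivAt (fun _ => c) x 0 0 :=
  ⟨fun _ => 0, Eventually.of_forall fun s => hasDerivAt_const s c, rfl, hasDerivAt_const x 0⟩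

lemma add (hf : HasSecondDerivAt f x p d) (hg : HasSecondDerivAt g x p₁ d₁) :
    HasSecondDerivAt (fun s => f s + g s) x (p + p₁) (d + d₁) := by
  obtain ⟨f', h1, rfl, h3⟩ := hf
  obtain ⟨g', k1, rfl, k3⟩ := hg
  refine ⟨fun s => f' s + g' s, ?_, rfl, h3.add k3⟩
  filter_upwards [h1, k1] with s a b using a.add b

lemma const_mul (c : ℝ) (hf : HasSecondDerivAt f x p d) :
    HasSecondDerivAt (fun s => c * f s) x (c * p) (c * d) := by
  obtain ⟨f', h1, rfl, h3⟩ := hf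
  refine ⟨fun s => c * f' s, ?_, rfl, h3.const_mul c⟩
  filter_upwards [h1] with s a using a.const_mul c

lemma comp (hφ : HasSecondDerivAt φ (g x) p₁ d₁) (hg : HasSecondDerivAt g x p d) :
    HasSecondDerivAt (fun s => φ (g s)) x (p₁ * p) (d₁ * p ^ 2 + p₁ * d) := by
  have hc := hg.hasDerivAt.continuousAt
  obtain ⟨φ', h1, rfl, h3⟩ := hφ
  obtain ⟨g', k1, rfl, k3⟩ := hg
  refine ⟨fun s => φ' (g s) * g' s, ?_, rfl, ?_⟩
  · filter_upwards [hc.eventually h1, k1] with s a b using a.comp s b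
  · refine ((h3.comp x k1.self_of_nhds).mul k3).congr_deriv ?_
    simp only [Function.comp]
    ring

/-- First and second order necessary conditions at a local maximum. -/
lemma of_isLocalMax (h : HasSecondDerivAt g x p d) (hm : IsLocalMax g x) : p = 0 ∧ d ≤ 0 := by
  have hp : p = 0 := hm.hasDerivAt_eq_zero h.hasDerivAt
  refine ⟨hp, ?_⟩
  by_contra! hd
  obtain ⟨g', h1, h2, h3⟩ := h
  have hdg : deriv g =ᶠ[𝓝 x] g' := h1.mono fun s hs => hs.deriv
  have hd2 : deriv (deriv g) x = d := by rw [hdg.deriv_eq, h3.deriv]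
  have hmin : IsLocalMin g x := isLocalMin_of_deriv_deriv_pos (hd2 ▸ hd)
    (by rw [hdg.eq_of_nhds, h2, hp]) h1.self_of_nhds.continuousAt
  have hconst : g =ᶠ[𝓝 x] fun _ => g x := by
    filter_upwards [hmin, hm] with s a b using le_antisymm b a
  have : deriv g =ᶠ[𝓝 x] fun _ => 0 := by
    filter_upwards [hconst.eventuallyEq_nhds] with s hs
    rw [hs.deriv_eq, deriv_const]
  rw [this.deriv_eq, deriv_const] at hd2
  exact hd.ne hd2

lemma sub_const_sq (c x : ℝ) : HasSecondDerivAt (fun s => (s - c) ^ 2) x (2 * (x - c)) 2 := by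
  refine ⟨fun s => 2 * (s - c), Eventually.of_forall fun s => ?_, rfl, ?_⟩
  · have := ((hasDerivAt_id s).sub_const c).fun_pow 2
    simpa using this
  · simpa using ((hasDerivAt_id x).sub_const c).const_mul 2

lemma sub_const (c x : ℝ) : HasSecondDerivAt (fun s => s - c) x 1 0 :=
  ⟨fun _ => 1, Eventually.of_forall fun s => (hasDerivAt_id s).sub_const c, rfl,
    hasDerivAt_const x 1⟩

lemma exp (x : ℝ) : HasSecondDerivAt Real.exp x (Real.exp x) (Real.exp x) :=
  ⟨Real.exp, Eventually.of_forall fun s => Real.hasDerivAt_exp s, rfl, Real.hasDerivAt_exp x⟩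

lemma rpow {x : ℝ} (hx : 0 < x) (r : ℝ) :
    HasSecondDerivAt (fun s => s ^ r) x (r * x ^ (r - 1)) (r * ((r - 1) * x ^ (r - 2))) := by
  refine ⟨fun s => r * s ^ (r - 1), ?_, rfl, ?_⟩
  · filter_upwards [lt_mem_nhds hx] with s hs
    exact Real.hasDerivAt_rpow_const (Or.inl hs.ne')
  · have := (Real.hasDerivAt_rpow_const (p := r - 1) (Or.inl hx.ne')).const_mul r
    rwa [show r - 1 - 1 = r - 2 by ring] at this

end HasSecondDerivAt

lemma hasDerivAt_max_zero_pow (k : ℕ) (x : ℝ) :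
    HasDerivAt (fun s : ℝ => max s 0 ^ (k + 2)) ((k + 2) * max x 0 ^ (k + 1)) x := by
  rcases lt_trichotomy x 0 with hx | rfl | hx
  · have : (fun s : ℝ => max s 0 ^ (k + 2)) =ᶠ[𝓝 x] fun _ => 0 := by
      filter_upwards [gt_mem_nhds hx] with s hs
      rw [max_eq_right hs.le]; simp
    rw [max_eq_right hx.le]
    simpa using (hasDerivAt_const x (0 : ℝ)).congr_of_eventuallyEq this
  · rw [max_self, zero_pow (by omega), mul_zero]
    rw [hasDerivAt_iff_isLittleO_nhds_zero]
    simp only [zero_add, max_self, smul_zero, sub_zero]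
    rw [zero_pow (by omega)]
    simp only [sub_zero]
    have h1 : (fun h : ℝ => max h 0 ^ (k + 2)) =O[𝓝 0] fun h : ℝ => h ^ (k + 2) := by
      refine Asymptotics.IsBigO.of_bound 1 (Eventually.of_forall fun h => ?_)
      rw [one_mul, norm_pow, norm_pow]
      gcongr
      simp only [Real.norm_eq_abs]
      rcases le_total h 0 with hh | hh
      · rw [max_eq_right hh]; simp
      · rw [max_eq_left hh]
    exact h1.trans_isLittleO (Asymptotics.isLittleO_pow_id (by omega))
  · have : (fun s : ℝ => max s 0 ^ (k + 2)) =ᶠ[𝓝 x] fun s => s ^ (k + 2) := by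
      filter_upwards [lt_mem_nhds hx] with s hs
      rw [max_eq_left hs.le]
    rw [max_eq_left hx.le]
    refine HasDerivAt.congr_of_eventuallyEq ?_ this
    simpa using hasDerivAt_pow (k + 2) x

lemma HasSecondDerivAt.max_zero_cube (x : ℝ) :
    HasSecondDerivAt (fun s : ℝ => max s 0 ^ 3) x (3 * max x 0 ^ 2) (6 * max x 0) := by
  refine ⟨fun s => 3 * max s 0 ^ 2, Eventually.of_forall fun s => ?_, rfl, ?_⟩
  · have := hasDerivAt_max_zero_pow 1 s
    norm_num at this
    exact this
  · have := (hasDerivAt_max_zero_pow 0 x).const_mul 3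
    norm_num at this
    refine this.congr_deriv ?_
    ring

/-- The operator `Δ + (1 - 2σ) / t ∂ₜ`, computed by second derivatives along coordinate lines,
takes the value `ℓ` on `F` at `X`. -/
def HasExtOp {n : ℕ} (σ : ℝ) (F : Pt n → ℝ) (X : Pt n) (ℓ : ℝ) : Prop :=
  ∃ (p₀ d : Fin n → ℝ) (p q : ℝ),
    (∀ i, HasSecondDerivAt (fun s => F (X.1 + s • EuclideanSpace.single i (1 : ℝ), X.2)) 0
      (p₀ i) (d i)) ∧
    HasSecondDerivAt (fun t => F (X.1, t)) X.2 p q ∧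
    ℓ = ∑ i, d i + q + (1 - 2 * σ) / X.2 * p

/-- The weighted vertical derivative `t ^ (1 - 2σ) ∂ₜF(x, t)` tends to `ℓ` as `t → 0⁺`. -/
def HasFlux {n : ℕ} (σ : ℝ) (F : Pt n → ℝ) (x : EuclideanSpace ℝ (Fin n)) (ℓ : ℝ) : Prop :=
  ∃ p : ℝ → ℝ, (∀ᶠ t in 𝓝[>] (0 : ℝ), HasDerivAt (fun s => F (x, s)) (p t) t) ∧
    Tendsto (fun t => t ^ (1 - 2 * σ) * p t) (𝓝[>] 0) (𝓝 ℓ)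

section Operators

variable {n : ℕ} {σ : ℝ} {F G : Pt n → ℝ} {X : Pt n} {x : EuclideanSpace ℝ (Fin n)} {k ℓ : ℝ}

lemma HasExtOp.add (hF : HasExtOp σ F X k) (hG : HasExtOp σ G X ℓ) :
    HasExtOp σ (fun Y => F Y + G Y) X (k + ℓ) := by
  obtain ⟨p₀, d, p, q, h1, h2, rfl⟩ := hF
  obtain ⟨p₀', d', p', q', k1, k2, rfl⟩ := hG
  refine ⟨fun i => p₀ i + p₀' i, fun i => d i + d' i, p + p', q + q',
    fun i => (h1 i).add (k1 i), h2.add k2, ?_⟩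
  rw [Finset.sum_add_distrib]
  ring

lemma HasExtOp.const_mul (c : ℝ) (hF : HasExtOp σ F X k) :
    HasExtOp σ (fun Y => c * F Y) X (c * k) := by
  obtain ⟨p₀, d, p, q, h1, h2, rfl⟩ := hF
  refine ⟨fun i => c * p₀ i, fun i => c * d i, c * p, c * q,
    fun i => (h1 i).const_mul c, h2.const_mul c, ?_⟩
  rw [← Finset.mul_sum]
  ring

lemma HasExtOp.congr (hF : HasExtOp σ F X k) (h : ∀ Y, G Y = F Y) (hk : k = ℓ) :
    HasExtOp σ G X ℓ := by
  rw [funext h, ← hk]; exact hF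

lemma HasExtOp.sub (hF : HasExtOp σ F X k) (hG : HasExtOp σ G X ℓ) :
    HasExtOp σ (fun Y => F Y - G Y) X (k - ℓ) :=
  (hF.add (hG.const_mul (-1))).congr (fun Y => by ring) (by ring)

/-- A function of `t` alone. -/
lemma HasExtOp.of_height {ψ : ℝ → ℝ} {p q : ℝ} (h : HasSecondDerivAt ψ X.2 p q) :
    HasExtOp σ (fun Y => ψ Y.2) X (q + (1 - 2 * σ) / X.2 * p) :=
  ⟨fun _ => 0, fun _ => 0, p, q, fun _ => .const (ψ X.2) 0, h, by simp⟩

lemma HasExtOp.const (c : ℝ) : HasExtOp σ (fun _ => c) X 0 :=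
  ⟨fun _ => 0, fun _ => 0, 0, 0, fun _ => .const _ _, .const _ _, by simp⟩

lemma hasSecondDerivAt_normSq_slice (x y : EuclideanSpace ℝ (Fin n)) (i : Fin n) :
    HasSecondDerivAt (fun s : ℝ => ‖x + s • EuclideanSpace.single i (1 : ℝ) - y‖ ^ 2) 0
      (2 * (x i - y i)) 2 := by
  have h1 : ∀ s : ℝ, ‖x + s • EuclideanSpace.single i (1 : ℝ) - y‖ ^ 2
      = (s - (-(x i - y i))) ^ 2 + (‖x - y‖ ^ 2 - (x i - y i) ^ 2) := by
    intro s
    rw [show x + s • EuclideanSpace.single i (1 : ℝ) - y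
      = (x - y) + s • EuclideanSpace.single i (1 : ℝ) by abel, norm_add_sq_real, inner_smul_right,
      EuclideanSpace.inner_single_right, norm_smul]
    simp
    ring
  rw [funext h1]
  exact ((HasSecondDerivAt.sub_const_sq _ 0).add (.const _ 0)).congr_val (by ring) (by ring)

lemma HasExtOp.normSq (y : EuclideanSpace ℝ (Fin n)) :
    HasExtOp σ (fun Y : Pt n => ‖Y.1 - y‖ ^ 2) X (2 * n) := by
  refine ⟨_, fun _ => 2, 0, 0, fun i => hasSecondDerivAt_normSq_slice X.1 y i,
    .const (‖X.1 - y‖ ^ 2) _, ?_⟩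
  simp [mul_comm]

/-- A function of one horizontal coordinate. -/
lemma HasExtOp.of_coord {ψ : ℝ → ℝ} {p q : ℝ} (j : Fin n) (h : HasSecondDerivAt ψ (X.1 j) p q) :
    HasExtOp σ (fun Y => ψ (Y.1 j)) X q := by
  refine ⟨fun i => if i = j then p else 0, fun i => if i = j then q else 0, 0, 0, fun i => ?_,
    .const (ψ (X.1 j)) _, by simp⟩
  by_cases hij : i = j
  · subst hij
    have h0 : HasSecondDerivAt (fun s : ℝ => s - (-(X.1 i))) 0 1 0 := .sub_const _ _
    have h' : HasSecondDerivAt ψ ((fun s : ℝ => s - (-(X.1 i))) 0) p q := by simpa using h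
    refine ((HasSecondDerivAt.comp (g := fun s : ℝ => s - (-(X.1 i))) h' h0).congr_of_eventuallyEq
      (Eventually.of_forall fun s => ?_)).congr_val (by simp) (by simp)
    simp [add_comm]
  · have : ∀ s : ℝ, (X.1 + s • EuclideanSpace.single i (1 : ℝ)) j = X.1 j := by
      intro s
      simp [Ne.symm hij]
    simp only [this, hij, if_false]
    exact .const _ _

lemma HasExtOp.nonpos_of_isLocalMax (h : HasExtOp σ F X k) (hm : IsLocalMax F X) : k ≤ 0 := by
  obtain ⟨p₀, d, p, q, h1, h2, rfl⟩ := h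
  have hx : ∀ i, d i ≤ 0 := fun i => by
    refine ((h1 i).of_isLocalMax ?_).2
    have hc : ContinuousAt
        (fun s : ℝ => ((X.1 + s • EuclideanSpace.single i (1 : ℝ), X.2) : Pt n)) 0 := by fun_prop
    have h0 : ((X.1 + (0 : ℝ) • EuclideanSpace.single i (1 : ℝ), X.2) : Pt n) = X := by simp
    have := hc.tendsto
    rw [h0] at this
    filter_upwards [this.eventually hm] with s hs
    simpa using hs
  have ht : p = 0 ∧ q ≤ 0 := by
    refine h2.of_isLocalMax ?_
    have hc : ContinuousAt (fun s : ℝ => ((X.1, s) : Pt n)) X.2 := by fun_prop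
    exact hc.tendsto.eventually hm
  have := Finset.sum_nonpos fun i (_ : i ∈ Finset.univ) => hx i
  rw [ht.1]
  linarith [ht.2]

lemma HasFlux.add (hF : HasFlux σ F x k) (hG : HasFlux σ G x ℓ) :
    HasFlux σ (fun Y => F Y + G Y) x (k + ℓ) := by
  obtain ⟨p, h1, h2⟩ := hF
  obtain ⟨q, k1, k2⟩ := hG
  refine ⟨fun t => p t + q t, ?_, ?_⟩
  · filter_upwards [h1, k1] with t a b using a.add b
  · refine (h2.add k2).congr fun t => by ring

lemma HasFlux.const_mul (c : ℝ) (hF : HasFlux σ F x k) :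
    HasFlux σ (fun Y => c * F Y) x (c * k) := by
  obtain ⟨p, h1, h2⟩ := hF
  refine ⟨fun t => c * p t, ?_, ?_⟩
  · filter_upwards [h1] with t a using a.const_mul c
  · refine (h2.const_mul c).congr fun t => by ring

lemma HasFlux.congr (hF : HasFlux σ F x k) (h : ∀ Y, G Y = F Y) (hk : k = ℓ) :
    HasFlux σ G x ℓ := by
  rw [funext h, ← hk]; exact hF

lemma HasFlux.sub (hF : HasFlux σ F x k) (hG : HasFlux σ G x ℓ) :
    HasFlux σ (fun Y => F Y - G Y) x (k - ℓ) :=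
  (hF.add (hG.const_mul (-1))).congr (fun Y => by ring) (by ring)

/-- A function that does not depend on `t` has zero flux. -/
lemma HasFlux.of_horizontal (f : EuclideanSpace ℝ (Fin n) → ℝ) :
    HasFlux σ (fun Y => f Y.1) x 0 :=
  ⟨fun _ => 0, Eventually.of_forall fun t => hasDerivAt_const t (f x), by simp⟩

lemma HasFlux.nonpos_of_max (h : HasFlux σ F x k)
    (hc : ContinuousWithinAt (fun t : ℝ => F (x, t)) (Ioi 0) 0)
    (hm : ∀ᶠ t in 𝓝[>] (0 : ℝ), F (x, t) ≤ F (x, 0)) : k ≤ 0 := by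
  by_contra! hk
  obtain ⟨p, h1, h2⟩ := h
  have h3 := h1.and ((h2.eventually (lt_mem_nhds hk)).and (hm.and self_mem_nhdsWithin))
  obtain ⟨δ, hδ, hsub⟩ := mem_nhdsGT_iff_exists_Ioo_subset.1 h3
  have hδ0 : (0 : ℝ) < δ := hδ
  have hcont : ContinuousOn (fun t : ℝ => F (x, t)) (Icc 0 (δ / 2)) := by
    intro t ht
    rcases ht.1.eq_or_lt with rfl | ht0
    · have : ContinuousWithinAt (fun t : ℝ => F (x, t)) (Ici 0) 0 := by
        rw [← Ioi_insert, continuousWithinAt_insert_self]; exact hc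
      exact this.mono Icc_subset_Ici_self
    · exact (hsub ⟨ht0, by linarith [ht.2]⟩).1.continuousAt.continuousWithinAt
  have hmono : StrictMonoOn (fun t : ℝ => F (x, t)) (Icc 0 (δ / 2)) := by
    refine strictMonoOn_of_deriv_pos (convex_Icc _ _) hcont fun t ht => ?_
    rw [interior_Icc] at ht
    obtain ⟨a, b, -⟩ := hsub ⟨ht.1, by linarith [ht.2]⟩
    rw [a.deriv]
    exact pos_of_mul_pos_right b (Real.rpow_nonneg ht.1.le _)
  have hlt := hmono (left_mem_Icc.2 (by linarith)) (right_mem_Icc.2 (by linarith))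
    (by linarith : (0 : ℝ) < δ / 2)
  exact absurd (hsub ⟨by linarith, by linarith⟩ : _ ∧ _ ∧ _ ∧ _).2.2.1 (not_le.2 hlt)

/-- **Comparison principle** with oblique conditions on `t = 0`: a function which is a strict
subsolution wherever it is positive is nonpositive. -/
lemma nonpos_of_strict_subsolution {K : Set (Pt n)} (hK : IsCompact K) (hF : ContinuousOn F K)
    (h : ∀ X ∈ K, 0 < F X → (K ∈ 𝓝 X ∧ ∃ ℓ > 0, HasExtOp σ F X ℓ) ∨
      (X.2 = 0 ∧ (∀ᶠ t in 𝓝[>] (0 : ℝ), (X.1, t) ∈ K) ∧ ∃ ℓ > 0, HasFlux σ F X.1 ℓ)) :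
    ∀ X ∈ K, F X ≤ 0 := by
  intro X hX
  by_contra! hpos
  obtain ⟨Z, hZ, hmax⟩ := hK.exists_isMaxOn ⟨X, hX⟩ hF
  rcases h Z hZ (hpos.trans_le (hmax hX)) with ⟨hn, ℓ, hℓ, hop⟩ | ⟨h0, hev, ℓ, hℓ, hfl⟩
  · exact absurd (hop.nonpos_of_isLocalMax (hmax.isLocalMax hn)) (not_le.2 hℓ)
  · obtain ⟨z, t⟩ := Z
    simp only at h0 hev hfl
    subst h0
    refine absurd (hfl.nonpos_of_max ?_ (hev.mono fun t ht => hmax ht)) (not_le.2 hℓ)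
    have h1 : Tendsto (fun t : ℝ => ((z, t) : Pt n)) (𝓝[>] 0) (𝓝[K] (z, 0)) := by
      refine tendsto_nhdsWithin_iff.2 ⟨?_, hev⟩
      have : Continuous (fun t : ℝ => ((z, t) : Pt n)) := by fun_prop
      exact (this.tendsto 0).mono_left nhdsWithin_le_nhds
    exact (hF _ hZ).tendsto.comp h1

end Operators

/-- A nonnegative solution of the extension equation in `Q₁` whose weighted vertical derivative
on the bottom is bounded by `M` times the function. -/
structure IsRobinSolution {n : ℕ} (σ M : ℝ) (V : Pt n → ℝ) : Prop where
  nonneg : ∀ x t, ‖x‖ ≤ 1 → 0 ≤ t → t ≤ 1 → 0 ≤ V (x, t)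
  continuousOn : ContinuousOn V (closedBall 0 1 ×ˢ Icc 0 1)
  hasExtOp : ∀ X : Pt n, ‖X.1‖ < 1 → 0 < X.2 → X.2 < 1 → HasExtOp σ V X 0
  hasFlux : ∀ x, ‖x‖ < 1 → ∃ ℓ, |ℓ| ≤ M * V (x, 0) ∧ HasFlux σ V x ℓ

section Barriers

variable {n : ℕ} {σ M : ℝ} {V : Pt n → ℝ}

lemma isCompact_cylinder (p : EuclideanSpace ℝ (Fin n)) (r a b : ℝ) :
    IsCompact (closedBall p r ×ˢ Icc a b) :=
  (isCompact_closedBall p r).prod isCompact_Icc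

lemma cylinder_mem_nhds {p : EuclideanSpace ℝ (Fin n)} {r a b : ℝ} {X : Pt n}
    (hx : ‖X.1 - p‖ < r) (ha : a < X.2) (hb : X.2 < b) :
    closedBall p r ×ˢ Icc a b ∈ 𝓝 X :=
  prod_mem_nhds (closedBall_mem_nhds_of_mem (by rwa [mem_ball_iff_norm])) (Icc_mem_nhds ha hb)

lemma IsRobinSolution.continuousOn_cylinder (hV : IsRobinSolution σ M V)
    {p : EuclideanSpace ℝ (Fin n)} {r a b : ℝ} (hp : ‖p‖ + r ≤ 1) (ha : 0 ≤ a) (hb : b ≤ 1) :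
    ContinuousOn V (closedBall p r ×ˢ Icc a b) :=
  hV.continuousOn.mono (prod_mono (closedBall_subset_closedBall' (by
    rw [dist_zero_right]; linarith)) (Icc_subset_Icc ha hb))

lemma norm_le_of_norm_sub_le {x p : EuclideanSpace ℝ (Fin n)} {r R : ℝ} (h : ‖x - p‖ ≤ r)
    (hp : ‖p‖ + r ≤ R) : ‖x‖ ≤ R := by
  have := norm_add_le (x - p) p
  rw [sub_add_cancel] at this
  linarith

lemma norm_lt_of_norm_sub_le {x p : EuclideanSpace ℝ (Fin n)} {r R : ℝ} (h : ‖x - p‖ ≤ r)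
    (hp : ‖p‖ + r < R) : ‖x‖ < R :=
  (norm_le_of_norm_sub_le h le_rfl).trans_lt hp

lemma hasExtOp_gaussian (κ τ : ℝ) (p : EuclideanSpace ℝ (Fin n)) (X : Pt n) :
    HasExtOp σ (fun Y : Pt n => Real.exp (-κ * (‖Y.1 - p‖ ^ 2 + (Y.2 - τ) ^ 2))) X
      (Real.exp (-κ * (‖X.1 - p‖ ^ 2 + (X.2 - τ) ^ 2)) *
        (4 * κ ^ 2 * (‖X.1 - p‖ ^ 2 + (X.2 - τ) ^ 2)
          - κ * (2 * n + 2 + (1 - 2 * σ) / X.2 * (2 * (X.2 - τ))))) := by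
  set e := Real.exp (-κ * (‖X.1 - p‖ ^ 2 + (X.2 - τ) ^ 2)) with he
  refine ⟨fun i => e * (-κ * (2 * (X.1 i - p i))),
    fun i => e * (4 * κ ^ 2 * (X.1 i - p i) ^ 2 - 2 * κ),
    e * (-κ * (2 * (X.2 - τ))), e * (4 * κ ^ 2 * (X.2 - τ) ^ 2 - 2 * κ), fun i => ?_, ?_, ?_⟩
  · have h1 := ((hasSecondDerivAt_normSq_slice X.1 p i).add (.const ((X.2 - τ) ^ 2) 0)).const_mul
      (-κ)
    refine (HasSecondDerivAt.comp (.exp _) h1).congr_val ?_ ?_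
    · simp [he]
    · simp only [zero_smul, add_zero, ← he]
      ring
  · have h1 := ((HasSecondDerivAt.const (‖X.1 - p‖ ^ 2) X.2).add (.sub_const_sq τ X.2)).const_mul
      (-κ)
    refine (HasSecondDerivAt.comp (.exp _) h1).congr_val ?_ ?_
    · simp [he]
    · simp only [← he]
      ring
  · have h2 : ∑ i, (X.1 i - p i) ^ 2 = ‖X.1 - p‖ ^ 2 := by
      rw [EuclideanSpace.norm_sq_eq]
      simp
    rw [← Finset.mul_sum, Finset.sum_sub_distrib, ← Finset.mul_sum, h2]
    simp
    ring

/-- The loss in one doubling of an interior cylinder of positivity. -/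
def doublingConst (n : ℕ) : ℝ := Real.exp (-8 * (n + 3)) - Real.exp (-9 * (n + 3))

lemma doublingConst_pos (n : ℕ) : 0 < doublingConst n := by
  unfold doublingConst
  have : (0 : ℝ) ≤ n := n.cast_nonneg
  have := Real.exp_lt_exp.2 (by nlinarith : (-9 * (n + 3) : ℝ) < -8 * (n + 3))
  linarith

/-- Positivity spreads from an interior cylinder to the concentric cylinder of twice the size. -/
lemma IsRobinSolution.interior_doubling (hV : IsRobinSolution σ M V) (hσ0 : 0 < σ) (hσ1 : σ < 1)
    {p : EuclideanSpace ℝ (Fin n)} {τ s q : ℝ} (hs : 0 < s) (hτ : 4 * s ≤ τ)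
    (hp : ‖p‖ + 3 * s < 1) (hτ1 : τ + 3 * s < 1)
    (h : ∀ x t, ‖x - p‖ ≤ s → |t - τ| ≤ s → q ≤ V (x, t)) (hq : 0 ≤ q) {x t}
    (hx : ‖x - p‖ ≤ 2 * s) (ht : |t - τ| ≤ 2 * s) : doublingConst n * q ≤ V (x, t) := by
  set γ : ℝ := n + 3 with hγ
  have hn : (0 : ℝ) ≤ n := n.cast_nonneg
  have hγ0 : 0 < γ := by positivity
  set κ : ℝ := γ / s ^ 2 with hκ
  have hκ0 : 0 < κ := by positivity
  have hκs : κ * s ^ 2 = γ := by rw [hκ]; field_simp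
  set b : Pt n → ℝ := fun Y =>
    Real.exp (-κ * (‖Y.1 - p‖ ^ 2 + (Y.2 - τ) ^ 2)) - Real.exp (-9 * γ) with hb
  have hle : ∀ X ∈ closedBall p (3 * s) ×ˢ Icc (τ - 3 * s) (τ + 3 * s), q * b X - V X ≤ 0 := by
    refine nonpos_of_strict_subsolution (σ := σ) (isCompact_cylinder _ _ _ _) ?_ ?_
    · refine ContinuousOn.sub (Continuous.continuousOn (by fun_prop))
        (hV.continuousOn_cylinder hp.le (by linarith) hτ1.le)
    rintro ⟨y, u⟩ ⟨hy, hu⟩ hpos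
    left
    simp only [mem_closedBall_iff_norm, mem_Icc] at hy hu
    have hVnn : 0 ≤ V (y, u) := hV.nonneg _ _ (norm_le_of_norm_sub_le hy hp.le) (by linarith)
      (by linarith)
    have hqb : 0 < q * b (y, u) := by linarith
    have hb0 : 0 < b (y, u) := pos_of_mul_pos_right hqb hq
    have hq0 : 0 < q := pos_of_mul_pos_left hqb hb0.le
    set g := ‖y - p‖ ^ 2 + (u - τ) ^ 2 with hg
    have hg9 : g < 9 * s ^ 2 := by
      have : Real.exp (-9 * γ) < Real.exp (-κ * g) := by
        have := hb0; simp only [hb] at this; linarith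
      rw [Real.exp_lt_exp] at this
      by_contra! hcon
      nlinarith
    have hg1 : s ^ 2 < g := by
      by_contra! hcon
      have h1 : ‖y - p‖ ≤ s := (le_abs_self _).trans
        (abs_le_of_sq_le_sq (by nlinarith [sq_nonneg (u - τ)]) hs.le)
      have h2 : |u - τ| ≤ s := abs_le_of_sq_le_sq (by nlinarith [sq_nonneg ‖y - p‖]) hs.le
      have h3 := h y u h1 h2
      have h4 : b (y, u) ≤ 1 := by
        have : Real.exp (-κ * g) ≤ 1 := Real.exp_le_one_iff.2 (by nlinarith [sq_nonneg s])
        have := Real.exp_pos (-9 * γ)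
        simp only [hb]
        linarith
      nlinarith
    have hy3 : ‖y - p‖ < 3 * s := by
      refine lt_of_pow_lt_pow_left₀ 2 (by positivity) ?_
      nlinarith [sq_nonneg (u - τ)]
    have hu3 : |u - τ| < 3 * s := by
      refine abs_lt_of_sq_lt_sq ?_ (by positivity)
      nlinarith [sq_nonneg ‖y - p‖]
    rw [abs_lt] at hu3
    have hus : s ≤ u := by linarith
    have hu0 : 0 < u := by linarith
    refine ⟨cylinder_mem_nhds hy3 (by simp only; linarith) (by simp only; linarith), _, ?_,
      (((hasExtOp_gaussian κ τ p (y, u)).sub (.const _)).const_mul q).sub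
        (hV.hasExtOp (y, u) (norm_lt_of_norm_sub_le hy hp) hu0 (by simp only; linarith))⟩
    simp only [sub_zero, ← hg]
    refine mul_pos hq0 (mul_pos (Real.exp_pos _) ?_)
    have hdrift : (1 - 2 * σ) / u * (2 * (u - τ)) ≤ 6 := by
      rw [div_mul_eq_mul_div, div_le_iff₀ hu0]
      have h1 : |(1 - 2 * σ) * (2 * (u - τ))| ≤ 1 * (6 * s) := by
        rw [abs_mul]
        refine mul_le_mul (abs_le.2 ⟨by linarith, by linarith⟩) (abs_le.2 ⟨by linarith, by linarith⟩)
          (abs_nonneg _) zero_le_one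
      linarith [le_abs_self ((1 - 2 * σ) * (2 * (u - τ)))]
    have h5 : κ * g > γ := by rw [← hκs]; exact mul_lt_mul_of_pos_left hg1 hκ0
    have h6 : 4 * κ ^ 2 * g - κ * (2 * n + 2 + (1 - 2 * σ) / u * (2 * (u - τ)))
      = κ * (4 * (κ * g) - (2 * n + 2 + (1 - 2 * σ) / u * (2 * (u - τ)))) := by ring
    rw [h6]
    refine mul_pos hκ0 ?_
    linarith
  rw [abs_le] at ht
  have h1 := hle (x, t) ⟨mem_closedBall_iff_norm.2 (by linarith), by simp only; linarith,
    by simp only; linarith⟩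
  have h2 : doublingConst n ≤ b (x, t) := by
    simp only [hb, doublingConst, ← hγ]
    refine sub_le_sub_right (Real.exp_le_exp.2 ?_) _
    have h3 : ‖x - p‖ ^ 2 ≤ 4 * s ^ 2 := by nlinarith [norm_nonneg (x - p)]
    have h4 : (t - τ) ^ 2 ≤ 4 * s ^ 2 := by nlinarith
    nlinarith
  nlinarith

lemma HasFlux.of_height {ψ ψ' : ℝ → ℝ} {ℓ : ℝ} {x : EuclideanSpace ℝ (Fin n)}
    (h : ∀ t > 0, HasDerivAt ψ (ψ' t) t)
    (hlim : Tendsto (fun t => t ^ (1 - 2 * σ) * ψ' t) (𝓝[>] 0) (𝓝 ℓ)) :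
    HasFlux σ (fun Y : Pt n => ψ Y.2) x ℓ :=
  ⟨ψ', by filter_upwards [self_mem_nhdsWithin] with t ht using h t ht, hlim⟩

lemma tendsto_rpow_nhdsGT_zero {r : ℝ} (hr : 0 < r) :
    Tendsto (fun t : ℝ => t ^ r) (𝓝[>] 0) (𝓝 0) := by
  have := (Real.continuous_rpow_const hr.le).tendsto 0
  rw [Real.zero_rpow hr.ne'] at this
  exact this.mono_left nhdsWithin_le_nhds

lemma HasFlux.height_sq (hσ1 : σ < 1) {x : EuclideanSpace ℝ (Fin n)} :
    HasFlux σ (fun Y : Pt n => Y.2 ^ 2) x 0 := by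
  refine HasFlux.of_height (ψ := fun t => t ^ 2) (ψ' := fun t => 2 * t)
    (fun t _ => by simpa using hasDerivAt_pow 2 t) ?_
  have := (tendsto_rpow_nhdsGT_zero (show 0 < 2 - 2 * σ by linarith)).const_mul 2
  rw [mul_zero] at this
  refine this.congr' ?_
  filter_upwards [self_mem_nhdsWithin] with t ht
  have ht : 0 < t := ht
  rw [show 2 - 2 * σ = (1 - 2 * σ) + 1 by ring, Real.rpow_add ht, Real.rpow_one]
  ring

lemma HasFlux.height_rpow {x : EuclideanSpace ℝ (Fin n)} :
    HasFlux σ (fun Y : Pt n => Y.2 ^ (2 * σ)) x (2 * σ) := by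
  refine HasFlux.of_height (ψ := fun t => t ^ (2 * σ)) (ψ' := fun t => 2 * σ * t ^ (2 * σ - 1))
    (fun t ht => Real.hasDerivAt_rpow_const (Or.inl ht.ne')) ?_
  refine tendsto_const_nhds.congr' ?_
  filter_upwards [self_mem_nhdsWithin] with t ht
  have ht : 0 < t := ht
  have : t ^ (1 - 2 * σ) * t ^ (2 * σ - 1) = 1 := by
    rw [← Real.rpow_add ht]; simp
  linear_combination (-2 * σ) * this

lemma hasExtOp_height_sq {X : Pt n} (hX : 0 < X.2) :
    HasExtOp σ (fun Y : Pt n => Y.2 ^ 2) X (2 * (2 - 2 * σ)) := by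
  have := HasExtOp.of_height (σ := σ) (X := X) (HasSecondDerivAt.sub_const_sq 0 X.2)
  refine this.congr (fun Y => by simp) ?_
  field_simp
  ring

lemma hasExtOp_height_rpow {X : Pt n} (hX : 0 < X.2) :
    HasExtOp σ (fun Y : Pt n => Y.2 ^ (2 * σ)) X 0 := by
  have := HasExtOp.of_height (σ := σ) (X := X) (HasSecondDerivAt.rpow hX (2 * σ))
  refine this.congr (fun Y => rfl) ?_
  rw [Real.rpow_sub hX, Real.rpow_sub hX]
  simp only [Real.rpow_one, Real.rpow_two]
  field_simp
  ring

/-- Positivity on a horizontal disc close to the bottom spreads down to the bottom. -/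
lemma IsRobinSolution.spread_down (hV : IsRobinSolution σ M V) (hσ0 : 0 < σ) (hσ1 : σ < 1)
    (hM : 0 < M) {y : EuclideanSpace ℝ (Fin n)} {h q : ℝ} (hy : ‖y‖ + 1 / 4 < 1) (h1 : h < 1)
    (hh1 : (16 * n + 1) / (2 - 2 * σ) * h ^ 2 ≤ 1 / 4)
    (hh2 : M / (8 * σ) * h ^ (2 * σ) ≤ 1 / 4) (hq : 0 ≤ q)
    (hd : ∀ x, ‖x - y‖ ≤ 1 / 4 → q ≤ V (x, h)) {u : ℝ} (hu0 : 0 ≤ u) (hu1 : u ≤ h) :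
    q / 4 ≤ V (y, u) := by
  set A : ℝ := (16 * n + 1) / (2 - 2 * σ) with hA
  set κ : ℝ := M / (8 * σ) with hκ
  have hσ2 : 0 < 2 - 2 * σ := by linarith
  have hA0 : 0 ≤ A := by positivity
  have hAσ : A * (2 * (2 - 2 * σ)) = 2 * (16 * n + 1) := by
    have := div_mul_cancel₀ (16 * (n : ℝ) + 1) hσ2.ne'
    rw [hA]
    linear_combination 2 * this
  have hκ0 : 0 ≤ κ := by positivity
  have hκσ : κ * (2 * σ) = M / 4 := by rw [hκ]; field_simp; ring
  set b : Pt n → ℝ := fun Y =>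
    1 / 4 + A * Y.2 ^ 2 + κ * Y.2 ^ (2 * σ) - 16 * ‖Y.1 - y‖ ^ 2 with hb
  have hcont : Continuous (fun t : ℝ => t ^ (2 * σ)) := Real.continuous_rpow_const (by positivity)
  have hpow : ∀ t, 0 ≤ t → t ≤ h → t ^ (2 * σ) ≤ h ^ (2 * σ) := fun t a b =>
    Real.rpow_le_rpow a b (by positivity)
  have hle : ∀ X ∈ closedBall y (1 / 4) ×ˢ Icc 0 h, q * b X - V X ≤ 0 := by
    refine nonpos_of_strict_subsolution (σ := σ) (isCompact_cylinder _ _ _ _) ?_ ?_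
    · refine ContinuousOn.sub (Continuous.continuousOn ?_)
        (hV.continuousOn_cylinder hy.le le_rfl h1.le)
      have := hcont.comp (continuous_snd : Continuous (Prod.snd : Pt n → ℝ))
      simp only [Function.comp_def] at this
      fun_prop
    rintro ⟨x, t⟩ ⟨hx, ht⟩ hpos
    simp only [mem_closedBall_iff_norm, mem_Icc] at hx ht
    have hVnn : 0 ≤ V (x, t) := hV.nonneg _ _ (norm_le_of_norm_sub_le hx hy.le) ht.1
      (by linarith)
    have hqb : 0 < q * b (x, t) := by linarith
    have hb0 : 0 < b (x, t) := pos_of_mul_pos_right hqb hq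
    have hq0 : 0 < q := pos_of_mul_pos_left hqb hb0.le
    have hbt : A * t ^ 2 + κ * t ^ (2 * σ) ≤ 1 / 2 := by
      have e1 : A * t ^ 2 ≤ A * h ^ 2 := by
        gcongr
        exact ht.1
        exact ht.2
      have e2 := mul_le_mul_of_nonneg_left (hpow t ht.1 ht.2) hκ0
      linarith
    have hx4 : ‖x - y‖ < 1 / 4 := by
      refine lt_of_pow_lt_pow_left₀ 2 (by norm_num) ?_
      simp only [hb] at hb0
      linarith
    have hth : t < h := by
      refine lt_of_le_of_ne ht.2 ?_
      rintro rfl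
      have := hd x hx
      have : b (x, t) ≤ 1 := by
        simp only [hb]
        nlinarith [sq_nonneg ‖x - y‖]
      nlinarith
    have hx1 := norm_lt_of_norm_sub_le hx hy
    rcases ht.1.eq_or_lt with rfl | ht0
    · right
      obtain ⟨ℓ, hℓ, hfl⟩ := hV.hasFlux x hx1
      refine ⟨rfl, ?_, _, ?_, (((((HasFlux.of_horizontal fun _ => (1 / 4 : ℝ)).add
        ((HasFlux.height_sq hσ1).const_mul A)).add (HasFlux.height_rpow.const_mul κ)).sub
        (HasFlux.of_horizontal fun z => 16 * ‖z - y‖ ^ 2)).const_mul q).sub hfl⟩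
      · filter_upwards [Ioo_mem_nhdsGT hth] with t ht
        exact ⟨mem_closedBall_iff_norm.2 hx, ht.1.le, ht.2.le⟩
      · have h2 : b (x, 0) ≤ 1 / 4 := by
          simp only [hb]
          rw [Real.zero_rpow (by positivity)]
          nlinarith [sq_nonneg ‖x - y‖]
        have h3 : ℓ ≤ M * V (x, 0) := (le_abs_self _).trans hℓ
        have h4 : M * V (x, 0) < M * (q * b (x, 0)) := by
          refine mul_lt_mul_of_pos_left ?_ hM
          linarith
        have h5 : M * (q * b (x, 0)) ≤ M * (q * (1 / 4)) := by gcongr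
        rw [hκσ]
        linarith
    · left
      refine ⟨cylinder_mem_nhds hx4 ht0 hth, _, ?_,
        (((((HasExtOp.const (1 / 4 : ℝ)).add ((hasExtOp_height_sq ht0).const_mul A)).add
        ((hasExtOp_height_rpow ht0).const_mul κ)).sub
        ((HasExtOp.normSq y).const_mul 16)).const_mul q).sub
        (hV.hasExtOp (x, t) hx1 ht0 (by simp only; linarith))⟩
      rw [sub_zero]
      refine mul_pos hq0 ?_
      linarith
  have h3 := hle (y, u) ⟨by simp, hu0, hu1⟩
  have h4 : 1 / 4 ≤ b (y, u) := by
    simp only [hb, sub_self, norm_zero]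
    have := mul_nonneg hκ0 (Real.rpow_nonneg hu0 (2 * σ))
    nlinarith [mul_nonneg hA0 (sq_nonneg u)]
  nlinarith

/-- Positivity on a horizontal disc spreads upwards. -/
lemma IsRobinSolution.spread_up (hV : IsRobinSolution σ M V) (hσ0 : 0 < σ) (hσ1 : σ < 1)
    {p : EuclideanSpace ℝ (Fin n)} {T S q A : ℝ} (hS : 0 < S) (hp : ‖p‖ + S < 1) (hT : 0 ≤ T)
    (hTS : T + S < 1) (hA1 : 1 ≤ A) (hA : 2 * n < A * (σ * min σ (1 - σ))) (hq : 0 ≤ q)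
    (hd : ∀ x, ‖x - p‖ ≤ S → q ≤ V (x, T)) {x : EuclideanSpace ℝ (Fin n)} {t : ℝ}
    (hx : ‖x - p‖ ≤ S) (ht : T ≤ t) (htS : t ≤ T + S) :
    q * (1 - A * ((t - T) / S) ^ σ - (‖x - p‖ / S) ^ 2) ≤ V (x, t) := by
  set b : Pt n → ℝ := fun Y =>
    1 - A * (S⁻¹ * (Y.2 - T)) ^ σ - (S⁻¹) ^ 2 * ‖Y.1 - p‖ ^ 2 with hb
  have hcont : Continuous (fun t : ℝ => t ^ σ) := Real.continuous_rpow_const hσ0.le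
  have hle : ∀ X ∈ closedBall p S ×ˢ Icc T (T + S), q * b X - V X ≤ 0 := by
    refine nonpos_of_strict_subsolution (σ := σ) (isCompact_cylinder _ _ _ _) ?_ ?_
    · refine ContinuousOn.sub (Continuous.continuousOn ?_)
        (hV.continuousOn_cylinder hp.le hT hTS.le)
      have := hcont.comp (show Continuous (fun Y : Pt n => S⁻¹ * (Y.2 - T)) by fun_prop)
      simp only [Function.comp_def] at this
      fun_prop
    rintro ⟨y, u⟩ ⟨hy, hu⟩ hpos
    left
    simp only [mem_closedBall_iff_norm, mem_Icc] at hy hu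
    have hVnn : 0 ≤ V (y, u) := hV.nonneg _ _ (norm_le_of_norm_sub_le hy hp.le) (by linarith)
      (by linarith)
    have hqb : 0 < q * b (y, u) := by linarith
    have hb0 : 0 < b (y, u) := pos_of_mul_pos_right hqb hq
    have hq0 : 0 < q := pos_of_mul_pos_left hqb hb0.le
    have hpow : 0 ≤ (S⁻¹ * (u - T)) ^ σ :=
      Real.rpow_nonneg (mul_nonneg (by positivity) (by linarith)) _
    have hyS : ‖y - p‖ < S := by
      refine lt_of_le_of_ne hy fun hcon => ?_
      have : (S⁻¹) ^ 2 * ‖y - p‖ ^ 2 = 1 := by rw [hcon]; field_simp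
      simp only [hb] at hb0
      nlinarith
    have huS : u < T + S := by
      refine lt_of_le_of_ne hu.2 fun hcon => ?_
      have : (S⁻¹ * (u - T)) ^ σ = 1 := by
        rw [hcon, show S⁻¹ * (T + S - T) = 1 by field_simp; ring, Real.one_rpow]
      simp only [hb, this] at hb0
      have := mul_nonneg (sq_nonneg S⁻¹) (sq_nonneg ‖y - p‖)
      linarith
    have huT : T < u := by
      refine lt_of_le_of_ne hu.1 ?_
      rintro rfl
      have h1 := hd y hy
      have h2 : b (y, T) ≤ 1 := by
        simp only [hb]
        nlinarith [mul_nonneg (sq_nonneg S⁻¹) (sq_nonneg ‖y - p‖)]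
      nlinarith
    have hu0 : 0 < u := by linarith
    have hv0 : 0 < S⁻¹ * (u - T) := mul_pos (by positivity) (by linarith)
    have hop : HasExtOp σ (fun Y : Pt n => (S⁻¹ * (Y.2 - T)) ^ σ) (y, u) _ :=
      HasExtOp.of_height (ψ := fun t => (S⁻¹ * (t - T)) ^ σ)
        (HasSecondDerivAt.comp (g := fun t => S⁻¹ * (t - T)) (HasSecondDerivAt.rpow hv0 σ)
          ((HasSecondDerivAt.sub_const T u).const_mul S⁻¹))
    refine ⟨cylinder_mem_nhds hyS huT huS, _, ?_,
      ((((HasExtOp.const 1).sub (hop.const_mul A)).sub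
        ((HasExtOp.normSq p).const_mul (S⁻¹ ^ 2))).const_mul q).sub
        (hV.hasExtOp (y, u) (norm_lt_of_norm_sub_le hy hp) hu0 (by simp only; linarith))⟩
    rw [sub_zero]
    refine mul_pos hq0 ?_
    simp only
    set v := S⁻¹ * (u - T) with hv
    set c := min σ (1 - σ) with hc
    have hc1 : c ≤ σ := min_le_left _ _
    have hc2 : c ≤ 1 - σ := min_le_right _ _
    have hc0 : 0 < c := lt_min hσ0 (by linarith)
    have hv1 : v ≤ 1 := by
      rw [hv, inv_mul_le_iff₀ hS]; linarith
    have hvp : 1 ≤ v ^ (σ - 2) := Real.one_le_rpow_of_pos_of_le_one_of_nonpos hv0 hv1 (by linarith)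
    have hsplit : v ^ (σ - 1) = v ^ (σ - 2) * v := by
      rw [show σ - 1 = σ - 2 + 1 by ring, Real.rpow_add hv0, Real.rpow_one]
    have hratio : (1 - 2 * σ) * ((u - T) / u) ≤ 1 - σ - c := by
      have r0 : 0 ≤ (u - T) / u := div_nonneg (by linarith) hu0.le
      have r1 : (u - T) / u ≤ 1 := (div_le_one hu0).2 (by linarith)
      rcases le_total 0 (1 - 2 * σ) with hs | hs <;> nlinarith
    have heq : σ * ((σ - 1) * v ^ (σ - 2)) * (S⁻¹ * 1) ^ 2 + σ * v ^ (σ - 1) * (S⁻¹ * 0)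
        + (1 - 2 * σ) / u * (σ * v ^ (σ - 1) * (S⁻¹ * 1))
        = σ * v ^ (σ - 2) * (S⁻¹) ^ 2 * ((σ - 1) + (1 - 2 * σ) * ((u - T) / u)) := by
      rw [hsplit, hv]; field_simp; ring
    have hub : σ * v ^ (σ - 2) * (S⁻¹) ^ 2 * ((σ - 1) + (1 - 2 * σ) * ((u - T) / u))
        ≤ -(σ * c * (S⁻¹) ^ 2) := by
      have e1 : σ * v ^ (σ - 2) * (S⁻¹) ^ 2 * ((σ - 1) + (1 - 2 * σ) * ((u - T) / u))
          ≤ σ * v ^ (σ - 2) * (S⁻¹) ^ 2 * (-c) := by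
        refine mul_le_mul_of_nonneg_left (by linarith) (by positivity)
      have e2 : σ * 1 * (S⁻¹) ^ 2 * c ≤ σ * v ^ (σ - 2) * (S⁻¹) ^ 2 * c := by gcongr
      linarith
    rw [heq]
    have hS2 : 0 < (S⁻¹) ^ 2 := by positivity
    have e3 := mul_le_mul_of_nonneg_left hub (by linarith : 0 ≤ A)
    have e4 := mul_lt_mul_of_pos_left hA hS2
    linarith
  have h3 := hle (x, t) ⟨mem_closedBall_iff_norm.2 hx, ht, htS⟩
  simp only [hb] at h3
  rw [div_eq_inv_mul, div_eq_inv_mul, mul_pow]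
  linarith

end Barriers

section HorizontalOscillation

variable {n : ℕ} {σ M : ℝ} {V : Pt n → ℝ}

lemma HasSecondDerivAt.mul {f g : ℝ → ℝ} {x p d p₁ d₁ : ℝ} (hf : HasSecondDerivAt f x p d)
    (hg : HasSecondDerivAt g x p₁ d₁) :
    HasSecondDerivAt (fun s => f s * g s) x (p * g x + f x * p₁)
      (d * g x + 2 * (p * p₁) + f x * d₁) := by
  obtain ⟨f', h1, rfl, h3⟩ := hf
  obtain ⟨g', k1, rfl, k3⟩ := hg
  refine ⟨fun s => f' s * g s + f s * g' s, ?_, rfl, ?_⟩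
  · filter_upwards [h1, k1] with s a b using a.mul b
  · exact ((h3.mul k1.self_of_nhds).add (h1.self_of_nhds.mul k3)).congr_deriv (by ring)

/-- A truncation of the fundamental profile `t ^ (2σ)`. -/
def truncProfile (σ k t : ℝ) : ℝ := t ^ (2 * σ) * Real.exp (-k * t ^ 2)

lemma continuous_truncProfile (hσ0 : 0 < σ) (k : ℝ) : Continuous (truncProfile σ k) := by
  have : Continuous (fun t : ℝ => t ^ (2 * σ)) := Real.continuous_rpow_const (by positivity)
  unfold truncProfile
  fun_prop

lemma truncProfile_nonneg {k t : ℝ} (ht : 0 ≤ t) : 0 ≤ truncProfile σ k t :=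
  mul_nonneg (Real.rpow_nonneg ht _) (Real.exp_pos _).le

lemma truncProfile_le (hσ0 : 0 < σ) (hσ1 : σ < 1) {r t : ℝ} (hr : 0 < r) (ht : 0 ≤ t) :
    truncProfile σ ((r ^ 2)⁻¹) t ≤ r ^ (2 * σ) := by
  have h1 : (t / r) ^ (2 * σ) ≤ 1 + (t / r) ^ 2 := by
    have h0 : 0 ≤ t / r := by positivity
    rcases le_total (t / r) 1 with h | h
    · have := Real.rpow_le_one h0 h (by positivity : 0 ≤ 2 * σ)
      nlinarith [sq_nonneg (t / r)]
    · have := Real.rpow_le_rpow_of_exponent_le h (by linarith : 2 * σ ≤ 2)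
      rw [Real.rpow_two] at this
      linarith
  have h2 := Real.add_one_le_exp ((t / r) ^ 2)
  have h3 : -(r ^ 2)⁻¹ * t ^ 2 = -(t / r) ^ 2 := by field_simp
  rw [truncProfile, h3, Real.exp_neg, ← div_eq_mul_inv, div_le_iff₀ (Real.exp_pos _)]
  rw [Real.div_rpow ht hr.le, div_le_iff₀ (by positivity)] at h1
  refine h1.trans ?_
  rw [mul_comm]
  gcongr
  linarith

lemma hasSecondDerivAt_exp_neg_sq (k t : ℝ) :
    HasSecondDerivAt (fun s => Real.exp (-k * s ^ 2)) t (Real.exp (-k * t ^ 2) * (-k * (2 * t)))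
      (Real.exp (-k * t ^ 2) * (4 * k ^ 2 * t ^ 2 - 2 * k)) := by
  have h1 := (HasSecondDerivAt.sub_const_sq 0 t).const_mul (-k)
  simp only [sub_zero] at h1
  exact (HasSecondDerivAt.comp (g := fun s => -k * s ^ 2) (.exp _) h1).congr_val rfl (by ring)

lemma hasExtOp_truncProfile (k : ℝ) {X : Pt n} (hX : 0 < X.2) :
    HasExtOp σ (fun Y : Pt n => truncProfile σ k Y.2) X
      (truncProfile σ k X.2 * (4 * k ^ 2 * X.2 ^ 2 - 4 * (1 + σ) * k)) := by
  have := HasExtOp.of_height (σ := σ) (X := X)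
    ((HasSecondDerivAt.rpow hX (2 * σ)).mul (hasSecondDerivAt_exp_neg_sq k X.2))
  refine this.congr (fun Y => rfl) ?_
  rw [truncProfile, Real.rpow_sub hX, Real.rpow_sub hX]
  simp only [Real.rpow_one, Real.rpow_two]
  field_simp
  ring

lemma HasFlux.truncProfile (k : ℝ) {x : EuclideanSpace ℝ (Fin n)} :
    HasFlux σ (fun Y : Pt n => truncProfile σ k Y.2) x (2 * σ) := by
  refine HasFlux.of_height (fun t ht => ((HasSecondDerivAt.rpow ht (2 * σ)).mul
    (hasSecondDerivAt_exp_neg_sq k t)).hasDerivAt) ?_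
  have hc : Continuous fun t : ℝ => Real.exp (-k * t ^ 2) * (2 * σ - 2 * k * t ^ 2) := by fun_prop
  have := hc.tendsto 0
  norm_num at this
  refine (this.mono_left nhdsWithin_le_nhds).congr' ?_
  filter_upwards [self_mem_nhdsWithin] with t ht
  have ht : 0 < t := ht
  have e1 : t ^ (1 - 2 * σ) * t ^ (2 * σ - 1) = 1 := by
    rw [← Real.rpow_add ht]; simp
  have e2 : t ^ (1 - 2 * σ) * t ^ (2 * σ) = t := by
    rw [← Real.rpow_add ht]; simp
  rw [neg_mul]
  linear_combination (-(2 * σ) * Real.exp (-(k * t ^ 2))) * e1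
    + (Real.exp (-(k * t ^ 2)) * (k * (2 * t))) * e2

lemma HasFlux.max_sub_cube (hσ1 : σ < 1) {T : ℝ} (hT : 0 ≤ T) {x : EuclideanSpace ℝ (Fin n)} :
    HasFlux σ (fun Y : Pt n => max (Y.2 - T) 0 ^ 3) x 0 := by
  refine HasFlux.of_height (ψ := fun t => max (t - T) 0 ^ 3)
    (ψ' := fun t => 3 * max (t - T) 0 ^ 2 * 1)
    (fun t _ => (HasSecondDerivAt.comp (g := fun s => s - T) (.max_zero_cube (t - T))
      (.sub_const T t)).hasDerivAt) ?_
  have h0 := (tendsto_rpow_nhdsGT_zero (show 0 < 3 - 2 * σ by linarith)).const_mul 3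
  rw [mul_zero] at h0
  refine squeeze_zero' ?_ ?_ h0
  · filter_upwards [self_mem_nhdsWithin] with t ht
    have ht : 0 < t := ht
    positivity
  · filter_upwards [self_mem_nhdsWithin] with t ht
    have ht : 0 < t := ht
    have h1 : max (t - T) 0 ≤ t := max_le (by linarith) ht.le
    have h2 : max (t - T) 0 ^ 2 ≤ t ^ 2 := by gcongr
    have h3 : t ^ (3 - 2 * σ) = t ^ (1 - 2 * σ) * t ^ 2 := by
      rw [show 3 - 2 * σ = (1 - 2 * σ) + 2 by ring, Real.rpow_add ht, Real.rpow_two]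
    rw [h3]
    have := mul_le_mul_of_nonneg_left h2 (Real.rpow_nonneg ht.le (1 - 2 * σ))
    linarith

lemma truncProfile_extOp_bound (hσ0 : 0 < σ) (hσ1 : σ < 1) {r t k : ℝ} (hr : 0 < r) (hk : 0 ≤ k)
    (hkr : (k + 1) * r ^ (2 * σ) ≤ 1) (ht : 0 ≤ t) :
    (k + 1) * ((2 * σ)⁻¹ * (0 - truncProfile σ (r ^ 2)⁻¹ t *
      (4 * ((r ^ 2)⁻¹) ^ 2 * t ^ 2 - 4 * (1 + σ) * (r ^ 2)⁻¹))) ≤ 4 / σ * (r ^ 2)⁻¹ := by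
  have d1 := truncProfile_le hσ0 hσ1 hr ht
  set κ := (r ^ 2)⁻¹ with hκ
  have hκ0 : 0 < κ := by positivity
  set R := r ^ (2 * σ) with hR
  have d0 := truncProfile_nonneg (σ := σ) (k := κ) ht
  have d2 : 0 - truncProfile σ κ t * (4 * κ ^ 2 * t ^ 2 - 4 * (1 + σ) * κ)
      ≤ R * (8 * κ) := by
    have : -(4 * κ ^ 2 * t ^ 2 - 4 * (1 + σ) * κ) ≤ 8 * κ := by
      have : 0 ≤ 4 * κ ^ 2 * t ^ 2 := by positivity
      nlinarith
    have f1 := mul_le_mul_of_nonneg_left this d0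
    have f2 := mul_le_mul_of_nonneg_right d1 (by positivity : 0 ≤ 8 * κ)
    linarith
  calc _ ≤ (k + 1) * ((2 * σ)⁻¹ * (R * (8 * κ))) := by gcongr
    _ = ((k + 1) * R) * (4 / σ * κ) := by field_simp; ring
    _ ≤ 1 * (4 / σ * κ) := by gcongr
    _ = 4 / σ * κ := one_mul _

/-- The coefficient of the square root in the barrier of `half_cylinder_bound`. -/
def sqrtCoeff (n : ℕ) (σ : ℝ) : ℝ := 4 * (2 * n + 10 + 4 / σ)

set_option maxHeartbeats 800000 in
/-- A solution on a cylinder which is nonpositive on a vertical hyperplane through the axis grows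
at a controlled rate away from that hyperplane. -/
lemma half_cylinder_bound (hσ0 : 0 < σ) (hσ1 : σ < 1) {W : Pt n → ℝ}
    {c : EuclideanSpace ℝ (Fin n)} {j : Fin n} {r T m k : ℝ} (hr : 0 < r) (hT : 0 ≤ T)
    (hm : 0 < m) (hk : 0 ≤ k) (hkr : (k + 1) * r ^ (2 * σ) ≤ 1)
    (hc : ContinuousOn W (closedBall c r ×ˢ Icc 0 (T + r)))
    (hop : ∀ X : Pt n, ‖X.1 - c‖ < r → 0 < X.2 → X.2 < T + r → HasExtOp σ W X 0)
    (hfl : ∀ x, ‖x - c‖ < r → ∃ ℓ, -(k * m) ≤ ℓ ∧ HasFlux σ W x ℓ)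
    (hle : ∀ x t, ‖x - c‖ ≤ r → 0 ≤ t → t ≤ T + r → W (x, t) ≤ m)
    (h0 : ∀ x t, ‖x - c‖ ≤ r → 0 ≤ t → t ≤ T + r → x j = c j → W (x, t) ≤ 0)
    {h : ℝ} (hh0 : 0 ≤ h) (hhr : h ≤ r) :
    W (c + EuclideanSpace.single j h, T) ≤
      m * (sqrtCoeff n σ * (h / r) ^ (1 / 2 : ℝ) + (h / r) ^ 2
        + (k + 1) * r ^ (2 * σ) / (2 * σ)) := by
  set A := sqrtCoeff n σ with hA
  have hA0 : 0 ≤ A := by rw [hA, sqrtCoeff]; positivity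
  set R := r ^ (2 * σ) with hR
  have hR0 : 0 < R := by positivity
  set κ := (r ^ 2)⁻¹ with hκ
  have hκ0 : 0 < κ := by positivity
  set K : Set (Pt n) := (closedBall c r ×ˢ Icc 0 (T + r)) ∩ {Y | c j ≤ Y.1 j} with hK
  have hcj : Continuous fun Y : Pt n => Y.1 j := by fun_prop
  have hKc : IsCompact K :=
    (isCompact_cylinder _ _ _ _).inter_right (isClosed_le continuous_const hcj)
  set B : Pt n → ℝ := fun Y => m * (A * (r⁻¹ * (Y.1 j - c j)) ^ (1 / 2 : ℝ)
    + κ * ‖Y.1 - c‖ ^ 2 + (r ^ 3)⁻¹ * max (Y.2 - T) 0 ^ 3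
    + (k + 1) * ((2 * σ)⁻¹ * (R - truncProfile σ κ Y.2))) with hB
  have hprof : ∀ t, 0 ≤ t → 0 ≤ (k + 1) * ((2 * σ)⁻¹ * (R - truncProfile σ κ t)) := by
    intro t ht
    have := truncProfile_le hσ0 hσ1 hr ht
    rw [← hκ, ← hR] at this
    have : 0 ≤ R - truncProfile σ κ t := by linarith
    positivity
  have hmain : ∀ X ∈ K, W X - B X ≤ 0 := by
    refine nonpos_of_strict_subsolution (σ := σ) hKc ?_ ?_
    · refine ContinuousOn.sub (hc.mono inter_subset_left) (Continuous.continuousOn ?_)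
      have h1 : Continuous fun Y : Pt n => (r⁻¹ * (Y.1 j - c j)) ^ (1 / 2 : ℝ) :=
        (Real.continuous_rpow_const (by norm_num)).comp
          (continuous_const.mul (hcj.sub continuous_const))
      have h2 : Continuous fun Y : Pt n => truncProfile σ κ Y.2 :=
        (continuous_truncProfile hσ0 κ).comp continuous_snd
      fun_prop
    rintro ⟨x, t⟩ ⟨⟨hx, ht⟩, hxj⟩ hpos
    simp only [mem_closedBall_iff_norm, mem_Icc, mem_ofPred_eq] at hx ht hxj
    have hWm := hle x t hx ht.1 ht.2
    have hβ := hprof t ht.1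
    have hv : 0 ≤ r⁻¹ * (x j - c j) := mul_nonneg (by positivity) (by linarith)
    have hs1 : 0 ≤ A * (r⁻¹ * (x j - c j)) ^ (1 / 2 : ℝ) := mul_nonneg hA0 (Real.rpow_nonneg hv _)
    have hs2 : 0 ≤ κ * ‖x - c‖ ^ 2 := by positivity
    have hs3 : 0 ≤ (r ^ 3)⁻¹ * max (t - T) 0 ^ 3 := by positivity
    have hBm : B (x, t) < m := by linarith
    have hsum : A * (r⁻¹ * (x j - c j)) ^ (1 / 2 : ℝ) + κ * ‖x - c‖ ^ 2
        + (r ^ 3)⁻¹ * max (t - T) 0 ^ 3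
        + (k + 1) * ((2 * σ)⁻¹ * (R - truncProfile σ κ t)) < 1 := by
      by_contra! hcon
      have : m * 1 ≤ B (x, t) := mul_le_mul_of_nonneg_left hcon hm.le
      linarith
    have hB0 : 0 ≤ B (x, t) := mul_nonneg hm.le (by positivity)
    have hxr : ‖x - c‖ < r := by
      refine lt_of_le_of_ne hx fun hcon => ?_
      have : κ * ‖x - c‖ ^ 2 = 1 := by rw [hcon, hκ]; field_simp
      linarith
    have htr : t < T + r := by
      refine lt_of_le_of_ne ht.2 fun hcon => ?_
      have : (r ^ 3)⁻¹ * max (t - T) 0 ^ 3 = 1 := by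
        rw [hcon, add_sub_cancel_left, max_eq_left hr.le]; field_simp
      linarith
    have hxj' : c j < x j := by
      refine lt_of_le_of_ne hxj fun hcon => ?_
      have := h0 x t hx ht.1 ht.2 hcon.symm
      linarith
    rcases ht.1.eq_or_lt with rfl | ht0
    · right
      obtain ⟨ℓ, hℓ, hflW⟩ := hfl x hxr
      refine ⟨rfl, ?_, _, ?_, hflW.sub
        (((HasFlux.of_horizontal fun y => A * (r⁻¹ * (y j - c j)) ^ (1 / 2 : ℝ)
            + κ * ‖y - c‖ ^ 2).add ((HasFlux.max_sub_cube hσ1 hT).const_mul ((r ^ 3)⁻¹))).add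
          ((((HasFlux.of_horizontal fun _ => R).sub (HasFlux.truncProfile κ)).const_mul
            ((2 * σ)⁻¹)).const_mul (k + 1)) |>.const_mul m)⟩
      · filter_upwards [Ioo_mem_nhdsGT htr] with t ht
        exact ⟨⟨mem_closedBall_iff_norm.2 hx, ht.1.le, ht.2.le⟩, hxj⟩
      · have : (2 * σ)⁻¹ * (0 - 2 * σ) = -1 := by field_simp; ring
        rw [this]
        linarith
    · left
      have hv0 : 0 < r⁻¹ * (x j - c j) := mul_pos (by positivity) (by linarith)
      have hop1 : HasExtOp σ (fun Y : Pt n => (r⁻¹ * (Y.1 j - c j)) ^ (1 / 2 : ℝ)) (x, t) _ :=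
        HasExtOp.of_coord (ψ := fun s => (r⁻¹ * (s - c j)) ^ (1 / 2 : ℝ)) j
          (HasSecondDerivAt.comp (g := fun s => r⁻¹ * (s - c j))
            (HasSecondDerivAt.rpow hv0 (1 / 2))
            ((HasSecondDerivAt.sub_const (c j) (x j)).const_mul r⁻¹))
      have hop3 : HasExtOp σ (fun Y : Pt n => max (Y.2 - T) 0 ^ 3) (x, t) _ :=
        HasExtOp.of_height (ψ := fun s => max (s - T) 0 ^ 3)
          (HasSecondDerivAt.comp (g := fun s => s - T) (.max_zero_cube (t - T)) (.sub_const T t))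
      refine ⟨?_, _, ?_, (hop (x, t) hxr ht0 htr).sub
        ((((hop1.const_mul A).add ((HasExtOp.normSq c).const_mul κ)).add
          (hop3.const_mul ((r ^ 3)⁻¹))).add ((((HasExtOp.const R).sub
          (hasExtOp_truncProfile κ ht0)).const_mul ((2 * σ)⁻¹)).const_mul (k + 1))
          |>.const_mul m)⟩
      · refine Filter.inter_mem (cylinder_mem_nhds hxr ht0 htr) ?_
        filter_upwards [(hcj.tendsto (x, t)).eventually (lt_mem_nhds hxj')] with Y hY using hY.le
      · simp only
        set v := r⁻¹ * (x j - c j) with hvdef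
        have hv1 : v ≤ 1 := by
          rw [hvdef, inv_mul_le_iff₀ hr]
          have := PiLp.norm_apply_le (x - c) j
          rw [Real.norm_eq_abs, PiLp.sub_apply] at this
          linarith [le_abs_self (x j - c j)]
        have hvp : 1 ≤ v ^ (1 / 2 - 2 : ℝ) :=
          Real.one_le_rpow_of_pos_of_le_one_of_nonpos hv0 hv1 (by norm_num)
        have e1 : A * (1 / 2 * ((1 / 2 - 1) * v ^ (1 / 2 - 2 : ℝ)) * (r⁻¹ * 1) ^ 2
            + 1 / 2 * v ^ (1 / 2 - 1 : ℝ) * (r⁻¹ * 0)) ≤ -(A / 4 * κ) := by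
          have : (r⁻¹) ^ 2 = κ := by rw [hκ, inv_pow]
          rw [mul_one, this]
          have := mul_le_mul_of_nonneg_left hvp (by positivity : 0 ≤ A / 4 * κ)
          linarith
        set u := max (t - T) 0 with hu
        have hu0 : 0 ≤ u := le_max_right _ _
        have hur : u ≤ r := max_le (by linarith) hr.le
        have hut : u ≤ t := max_le (by linarith) ht0.le
        have e3 : (r ^ 3)⁻¹ * (6 * u * 1 ^ 2 + 3 * u ^ 2 * 0 + (1 - 2 * σ) / t * (3 * u ^ 2 * 1))
            ≤ 9 * κ := by
          have d1 : (1 - 2 * σ) / t * (3 * u ^ 2 * 1) ≤ 3 * u := by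
            rw [div_mul_eq_mul_div, div_le_iff₀ ht0]
            have : (1 - 2 * σ) * u ^ 2 ≤ 1 * u ^ 2 := by gcongr; linarith
            nlinarith
          have d2 : 9 * κ = (r ^ 3)⁻¹ * (9 * r) := by rw [hκ]; field_simp
          rw [d2]
          gcongr
          linarith
        have e4 : (k + 1) * ((2 * σ)⁻¹ * (0 - truncProfile σ κ t *
            (4 * κ ^ 2 * t ^ 2 - 4 * (1 + σ) * κ))) ≤ 4 / σ * κ := by
          exact truncProfile_extOp_bound hσ0 hσ1 hr hk hkr ht0.le
        have e5 : A / 4 * κ = (2 * n + 10 + 4 / σ) * κ := by rw [hA, sqrtCoeff]; ring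
        rw [gt_iff_lt, zero_sub, neg_pos]
        refine mul_neg_of_pos_of_neg hm ?_
        linarith
  have hin : ((c + EuclideanSpace.single j h, T) : Pt n) ∈ K := by
    refine ⟨⟨mem_closedBall_iff_norm.2 ?_, hT, by simp only; linarith⟩, ?_⟩
    · simp [abs_of_nonneg hh0, hhr]
    · simp [hh0]
  have h1 := hmain _ hin
  have h2 : B (c + EuclideanSpace.single j h, T) ≤ m * (A * (h / r) ^ (1 / 2 : ℝ) + (h / r) ^ 2
        + (k + 1) * R / (2 * σ)) := by
    simp only [hB]
    refine mul_le_mul_of_nonneg_left ?_ hm.le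
    have d0 := truncProfile_nonneg (σ := σ) (k := κ) hT
    have d1 : (k + 1) * ((2 * σ)⁻¹ * (R - truncProfile σ κ T)) ≤ (k + 1) * R / (2 * σ) := by
      rw [mul_div_assoc, div_eq_inv_mul]
      gcongr
      linarith
    have d2 : κ * ‖c + EuclideanSpace.single j h - c‖ ^ 2 = (h / r) ^ 2 := by
      simp [hκ, div_eq_inv_mul, mul_pow]
    have d3 : (r ^ 3)⁻¹ * max (T - T) 0 ^ 3 = 0 := by simp
    have d4 : r⁻¹ * ((c + EuclideanSpace.single j h) j - c j) = h / r := by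
      simp [div_eq_inv_mul]
    rw [d2, d3, d4]
    linarith
  linarith

end HorizontalOscillation

section Reflection

variable {n : ℕ} {σ M : ℝ} {V : Pt n → ℝ}

/-- Reflection of `ℝⁿ` in the hyperplane `x j = c j`. -/
def coordReflect (j : Fin n) (c x : EuclideanSpace ℝ (Fin n)) : EuclideanSpace ℝ (Fin n) :=
  x + EuclideanSpace.single j (2 * (c j - x j))

lemma coordReflect_apply (j i : Fin n) (c x : EuclideanSpace ℝ (Fin n)) :
    coordReflect j c x i = if i = j then 2 * c j - x j else x i := by
  by_cases h : i = j
  · subst h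
    simp [coordReflect]
    ring
  · simp [coordReflect, h]

lemma norm_coordReflect_sub (j : Fin n) (c x : EuclideanSpace ℝ (Fin n)) :
    ‖coordReflect j c x - c‖ = ‖x - c‖ := by
  rw [← sq_eq_sq₀ (norm_nonneg _) (norm_nonneg _), EuclideanSpace.norm_sq_eq,
    EuclideanSpace.norm_sq_eq]
  refine Finset.sum_congr rfl fun i _ => ?_
  rw [PiLp.sub_apply, PiLp.sub_apply, coordReflect_apply]
  split_ifs with h
  · subst h
    rw [show 2 * c i - x i - c i = -(x i - c i) by ring, norm_neg]
  · rfl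

lemma coordReflect_of_eq {j : Fin n} {c x : EuclideanSpace ℝ (Fin n)} (h : x j = c j) :
    coordReflect j c x = x := by
  simp [coordReflect, h]

@[fun_prop]
lemma continuous_coordReflect (j : Fin n) (c : EuclideanSpace ℝ (Fin n)) :
    Continuous (coordReflect j c) := by
  have : Continuous fun s : ℝ => (EuclideanSpace.single j s : EuclideanSpace ℝ (Fin n)) := by
    have h : (fun s : ℝ => (EuclideanSpace.single j s : EuclideanSpace ℝ (Fin n)))
        = fun s => s • EuclideanSpace.single j (1 : ℝ) := by
      funext s; ext i; by_cases hi : i = j <;> simp [hi]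
    rw [h]; fun_prop
  unfold coordReflect
  fun_prop

lemma coordReflect_add_single (j : Fin n) (c : EuclideanSpace ℝ (Fin n)) (h : ℝ) :
    coordReflect j c (c + EuclideanSpace.single j h) = c + EuclideanSpace.single j (-h) := by
  ext i
  rw [coordReflect_apply]
  by_cases hi : i = j
  · subst hi; simp; ring
  · simp [hi]

lemma HasExtOp.comp_coordReflect {j : Fin n} {c : EuclideanSpace ℝ (Fin n)} {X : Pt n} {ℓ : ℝ}
    (h : HasExtOp σ V (coordReflect j c X.1, X.2) ℓ) :
    HasExtOp σ (fun Y : Pt n => V (coordReflect j c Y.1, Y.2)) X ℓ := by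
  obtain ⟨p₀, d, p, q, h1, h2, rfl⟩ := h
  refine ⟨fun i => if i = j then -p₀ i else p₀ i, d, p, q, fun i => ?_, h2, rfl⟩
  by_cases hij : i = j
  · subst hij
    simp only [if_true]
    have h0 : HasSecondDerivAt (fun s : ℝ => -1 * (s - 0)) 0 (-1 * 1) (-1 * 0) :=
      (HasSecondDerivAt.sub_const 0 0).const_mul (-1)
    have h' := h1 i
    rw [show (0 : ℝ) = (fun s : ℝ => -1 * (s - 0)) 0 by simp] at h'
    refine ((HasSecondDerivAt.comp (g := fun s : ℝ => -1 * (s - 0)) h' h0).congr_of_eventuallyEq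
      (Eventually.of_forall fun s => ?_)).congr_val (by ring) (by ring)
    simp only
    congr 2
    ext k
    rw [PiLp.add_apply, coordReflect_apply, coordReflect_apply]
    by_cases hk : k = i
    · subst hk; simp; ring
    · simp [hk]
  · simp only [hij, if_false]
    refine (h1 i).congr_of_eventuallyEq (Eventually.of_forall fun s => ?_)
    simp only
    congr 2
    ext k
    rw [PiLp.add_apply, coordReflect_apply, coordReflect_apply]
    by_cases hk : k = j
    · subst hk; simp [Ne.symm hij]
    · simp [hk]

/-- The relative oscillation in one horizontal direction at distance `h` for a solution on a
cylinder of radius `r`. -/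
def oscBound (n : ℕ) (σ M r h : ℝ) : ℝ :=
  sqrtCoeff n σ * (h / r) ^ (1 / 2 : ℝ) + (h / r) ^ 2 + (2 * M + 1) * r ^ (2 * σ) / (2 * σ)

lemma oscBound_mono (hσ0 : 0 < σ) {r h h' : ℝ} (hr : 0 < r) (h0 : 0 ≤ h) (hh : h ≤ h') :
    oscBound n σ M r h ≤ oscBound n σ M r h' := by
  have : 0 ≤ sqrtCoeff n σ := by unfold sqrtCoeff; positivity
  unfold oscBound
  gcongr

lemma IsRobinSolution.reflection_osc (hV : IsRobinSolution σ M V) (hσ0 : 0 < σ) (hσ1 : σ < 1)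
    (hM : 0 < M) {c : EuclideanSpace ℝ (Fin n)} {j : Fin n} {r T m : ℝ} (hr : 0 < r)
    (hT : 0 ≤ T) (hm : 0 < m) (hMr : (2 * M + 1) * r ^ (2 * σ) ≤ 1) (hc : ‖c‖ + r < 1)
    (hTr : T + r < 1) (hle : ∀ x t, ‖x - c‖ ≤ r → 0 ≤ t → t ≤ T + r → V (x, t) ≤ m)
    {h : ℝ} (hh : |h| ≤ r) :
    V (c + EuclideanSpace.single j h, T) - V (c + EuclideanSpace.single j (-h), T)
      ≤ m * oscBound n σ M r |h| := by
  have hnn : ∀ x t, ‖x - c‖ ≤ r → 0 ≤ t → t ≤ T + r → 0 ≤ V (x, t) := fun x t hx h0 h1 =>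
    hV.nonneg x t (norm_le_of_norm_sub_le hx hc.le) h0 (by linarith)
  set V' : Pt n → ℝ := fun Y => V (coordReflect j c Y.1, Y.2) with hV'
  have hcont := hV.continuousOn_cylinder hc.le le_rfl hTr.le
  have hcont' : ContinuousOn V' (closedBall c r ×ˢ Icc 0 (T + r)) := by
    refine hcont.comp (Continuous.continuousOn (by fun_prop)) ?_
    rintro ⟨x, t⟩ ⟨hx, ht⟩
    refine ⟨?_, ht⟩
    rw [mem_closedBall_iff_norm] at hx ⊢
    rwa [norm_coordReflect_sub]
  have hop : ∀ X : Pt n, ‖X.1 - c‖ < r → 0 < X.2 → X.2 < T + r → HasExtOp σ V X 0 :=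
    fun X h1 h2 h3 => hV.hasExtOp X (norm_lt_of_norm_sub_le h1.le hc) h2 (h3.trans hTr)
  have hop' : ∀ X : Pt n, ‖X.1 - c‖ < r → 0 < X.2 → X.2 < T + r → HasExtOp σ V' X 0 :=
    fun X h1 h2 h3 => HasExtOp.comp_coordReflect
      (hop (coordReflect j c X.1, X.2) (by simpa only [norm_coordReflect_sub]) h2 h3)
  have hfl : ∀ x, ‖x - c‖ < r → ∃ ℓ, |ℓ| ≤ M * m ∧ HasFlux σ V x ℓ := fun x hx => by
    obtain ⟨ℓ, h1, h2⟩ := hV.hasFlux x (norm_lt_of_norm_sub_le hx.le hc)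
    exact ⟨ℓ, h1.trans (mul_le_mul_of_nonneg_left (hle x 0 hx.le le_rfl (by linarith)) hM.le), h2⟩
  have hfl' : ∀ x, ‖x - c‖ < r → ∃ ℓ, |ℓ| ≤ M * m ∧ HasFlux σ V' x ℓ := fun x hx =>
    hfl (coordReflect j c x) (by rwa [norm_coordReflect_sub])
  rcases le_total 0 h with h0 | h0
  · have := half_cylinder_bound (j := j) hσ0 hσ1 hr hT hm (k := 2 * M) (by positivity) hMr
      (W := fun Y => V Y - V' Y) (hcont.sub hcont')
      (fun X h1 h2 h3 => ((hop X h1 h2 h3).sub (hop' X h1 h2 h3)).congr (fun _ => rfl) (by simp))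
      (fun x hx => by
        obtain ⟨ℓ, h1, h2⟩ := hfl x hx
        obtain ⟨ℓ', h1', h2'⟩ := hfl' x hx
        refine ⟨_, ?_, h2.sub h2'⟩
        linarith [(abs_le.1 h1).1, (abs_le.1 h1').2])
      (fun x t hx ht ht' => by
        have := hle x t hx ht ht'
        have := hnn (coordReflect j c x) t (by rwa [norm_coordReflect_sub]) ht ht'
        simp only [hV']
        linarith)
      (fun x t hx ht ht' hj => by simp [hV', coordReflect_of_eq hj])
      h0 ((le_abs_self h).trans hh)
    simp only [hV', coordReflect_add_single] at this
    rw [abs_of_nonneg h0]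
    exact this
  · have := half_cylinder_bound (j := j) hσ0 hσ1 hr hT hm (k := 2 * M) (by positivity) hMr
      (W := fun Y => V' Y - V Y) (hcont'.sub hcont)
      (fun X h1 h2 h3 => ((hop' X h1 h2 h3).sub (hop X h1 h2 h3)).congr (fun _ => rfl) (by simp))
      (fun x hx => by
        obtain ⟨ℓ, h1, h2⟩ := hfl x hx
        obtain ⟨ℓ', h1', h2'⟩ := hfl' x hx
        refine ⟨_, ?_, h2'.sub h2⟩
        linarith [(abs_le.1 h1').1, (abs_le.1 h1).2])
      (fun x t hx ht ht' => by
        have := hnn x t hx ht ht'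
        have := hle (coordReflect j c x) t (by rwa [norm_coordReflect_sub]) ht ht'
        simp only [hV']
        linarith)
      (fun x t hx ht ht' hj => by simp [hV', coordReflect_of_eq hj])
      (neg_nonneg.2 h0) ((neg_le_abs h).trans hh)
    simp only [hV', coordReflect_add_single, neg_neg] at this
    rw [abs_of_nonpos h0]
    exact this

/-- Horizontal oscillation control: near a point, a solution bounded by `m` is not much smaller
than its value at the point. -/
lemma IsRobinSolution.horizontal_osc (hV : IsRobinSolution σ M V) (hσ0 : 0 < σ) (hσ1 : σ < 1)
    (hM : 0 < M) {p : EuclideanSpace ℝ (Fin n)} {r S T m : ℝ} (hr : 0 < r) (hSr : S ≤ r)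
    (hT : 0 ≤ T) (hm : 0 < m) (hMr : (2 * M + 1) * r ^ (2 * σ) ≤ 1) (hp : ‖p‖ + 2 * r < 1)
    (hTr : T + r < 1) (hle : ∀ x t, ‖x - p‖ ≤ 2 * r → 0 ≤ t → t ≤ T + r → V (x, t) ≤ m)
    {x : EuclideanSpace ℝ (Fin n)} (hx : ‖x - p‖ ≤ S) :
    V (p, T) - n * (m * oscBound n σ M r S) ≤ V (x, T) := by
  have key : ∀ s : Finset (Fin n), ∀ x : EuclideanSpace ℝ (Fin n), ‖x - p‖ ≤ S →
      (∀ i, i ∉ s → x i = p i) → V (p, T) - s.card * (m * oscBound n σ M r S) ≤ V (x, T) := by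
    intro s
    induction s using Finset.induction_on with
    | empty =>
      intro x _ h
      have : x = p := by ext i; exact h i (by simp)
      simp [this]
    | insert j s hj ih =>
      intro x hx h
      set d := p j - x j with hd
      set y := x + EuclideanSpace.single j d with hy
      have hyi : ∀ i, y i = if i = j then p i else x i := by
        intro i
        by_cases hi : i = j
        · subst hi; simp [hy, hd]
        · simp [hy, hi]
      have hyp : ‖y - p‖ ≤ S := by
        refine le_trans ?_ hx
        rw [← sq_le_sq₀ (norm_nonneg _) (norm_nonneg _), EuclideanSpace.norm_sq_eq,
          EuclideanSpace.norm_sq_eq]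
        refine Finset.sum_le_sum fun i _ => ?_
        rw [PiLp.sub_apply, PiLp.sub_apply, hyi]
        split_ifs
        · simp; positivity
        · rfl
      have h1 := ih y hyp fun i hi => by
        rw [hyi]
        split_ifs with hij
        · rfl
        · exact h i (by simp [hij, hi])
      set c := x + EuclideanSpace.single j (d / 2) with hc
      have hcp : ‖c - p‖ ≤ S := by
        have e : c - p = (1 / 2 : ℝ) • (x - p) + (1 / 2 : ℝ) • (y - p) := by
          ext i
          by_cases hi : i = j
          · subst hi; simp [hc, hy]; ring
          · simp [hc, hy, hi]; ring
        rw [e]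
        refine (norm_add_le _ _).trans ?_
        rw [norm_smul, norm_smul]
        norm_num
        linarith
      have hS0 : 0 ≤ S := (norm_nonneg _).trans hx
      have hdS : |d / 2| ≤ S := by
        have := PiLp.norm_apply_le (x - p) j
        rw [PiLp.sub_apply, Real.norm_eq_abs, abs_sub_comm, ← hd] at this
        rw [abs_div, abs_two]
        linarith [abs_nonneg d]
      have h2 := hV.reflection_osc (j := j) (c := c) hσ0 hσ1 hM hr hT hm hMr
        (by
          have := norm_le_of_norm_sub_le hcp (le_refl (‖p‖ + S))
          linarith) hTr
        (fun z t hz => hle z t (by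
          have := norm_add_le (z - c) (c - p)
          rw [sub_add_sub_cancel] at this
          linarith)) (hdS.trans hSr)
      have e1 : c + EuclideanSpace.single j (d / 2) = y := by
        ext i
        by_cases hi : i = j
        · subst hi; simp [hc, hy]; ring
        · simp [hc, hy, hi]
      have e2 : c + EuclideanSpace.single j (-(d / 2)) = x := by
        ext i
        by_cases hi : i = j
        · subst hi; simp [hc]
        · simp [hc, hi]
      rw [e1, e2] at h2
      have h3 := mul_le_mul_of_nonneg_left
        (oscBound_mono (n := n) (M := M) hσ0 hr (abs_nonneg _) hdS) hm.le
      rw [Finset.card_insert_of_notMem hj]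
      push_cast
      linarith
  have := key Finset.univ x hx (by simp)
  simpa using this

end Reflection

section Chains

variable {n : ℕ} {σ M : ℝ} {V : Pt n → ℝ}

/-- Harnack chain of cylinders of fixed size. -/
lemma IsRobinSolution.interior_chain (hV : IsRobinSolution σ M V) (hσ0 : 0 < σ) (hσ1 : σ < 1)
    {s : ℝ} (hs : 0 < s) {p' : EuclideanSpace ℝ (Fin n)} {τ' : ℝ} (hp' : ‖p'‖ + 3 * s < 1)
    (hτ' : 4 * s ≤ τ') (hτ1' : τ' + 3 * s < 1) (N : ℕ) :
    ∀ (p : EuclideanSpace ℝ (Fin n)) (τ q : ℝ), ‖p‖ + 3 * s < 1 → 4 * s ≤ τ → τ + 3 * s < 1 →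
      0 ≤ q → ‖p' - p‖ ≤ N * s → |τ' - τ| ≤ N * s →
      (∀ x t, ‖x - p‖ ≤ s → |t - τ| ≤ s → q ≤ V (x, t)) →
      ∀ x t, ‖x - p'‖ ≤ s → |t - τ'| ≤ s → doublingConst n ^ N * q ≤ V (x, t) := by
  induction N with
  | zero =>
    intro p τ q _ _ _ _ h1 h2 h x t hx ht
    simp only [Nat.cast_zero, zero_mul, norm_le_zero_iff, sub_eq_zero, abs_nonpos_iff] at h1 h2
    subst h1 h2
    simpa using h x t hx ht
  | succ N ih =>
    intro p τ q hp hτ hτ1 hq h1 h2 h x t hx ht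
    have hN : (0 : ℝ) < N + 1 := by positivity
    set a : ℝ := 1 / (N + 1) with ha
    set b : ℝ := N / (N + 1) with hb
    have hab : b + a = 1 := by rw [ha, hb]; field_simp
    have ha0 : 0 ≤ a := by positivity
    have hb0 : 0 ≤ b := by positivity
    have haN : a * ((N + 1) * s) = s := by rw [ha]; field_simp
    have hbN : b * ((N + 1) * s) = N * s := by rw [hb]; field_simp
    push_cast at h1 h2
    set p₁ := b • p + a • p' with hp₁
    set τ₁ := b * τ + a * τ' with hτ₁
    have hp1 : p = (b + a) • p := by rw [hab, one_smul]
    have hp1' : p' = (b + a) • p' := by rw [hab, one_smul]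
    have d1 : ‖p₁ - p‖ ≤ s := by
      have : p₁ - p = a • (p' - p) := by
        nth_rewrite 1 [hp1]
        rw [hp₁]
        module
      rw [this, norm_smul, Real.norm_of_nonneg ha0, ← haN]
      gcongr
    have d2 : ‖p' - p₁‖ ≤ N * s := by
      have : p' - p₁ = b • (p' - p) := by
        nth_rewrite 1 [hp1']
        rw [hp₁]
        module
      rw [this, norm_smul, Real.norm_of_nonneg hb0, ← hbN]
      gcongr
    have d3 : |τ₁ - τ| ≤ s := by
      have : τ₁ - τ = a * (τ' - τ) := by rw [hτ₁]; linear_combination τ * hab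
      rw [this, abs_mul, abs_of_nonneg ha0, ← haN]
      gcongr
    have d4 : |τ' - τ₁| ≤ N * s := by
      have : τ' - τ₁ = b * (τ' - τ) := by rw [hτ₁]; linear_combination -τ' * hab
      rw [this, abs_mul, abs_of_nonneg hb0, ← hbN]
      gcongr
    have d5 : ‖p₁‖ ≤ b * ‖p‖ + a * ‖p'‖ := by
      refine (norm_add_le _ _).trans ?_
      rw [norm_smul, norm_smul, Real.norm_of_nonneg ha0, Real.norm_of_nonneg hb0]
    have hc0 := doublingConst_pos n
    have := ih p₁ τ₁ (doublingConst n * q)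
      (by
        have : b * (‖p‖ + 3 * s) + a * (‖p'‖ + 3 * s) < 1 := by
          rcases hb0.eq_or_lt with e | e
          · rw [← e] at hab ⊢
            rw [zero_add] at hab
            rw [hab]
            linarith
          · nlinarith
        have e : b * (‖p‖ + 3 * s) + a * (‖p'‖ + 3 * s)
            = b * ‖p‖ + a * ‖p'‖ + (b + a) * (3 * s) := by ring
        rw [e, hab] at this
        linarith)
      (by
        have e : (b + a) * (4 * s) ≤ τ₁ := by rw [hτ₁, add_mul]; gcongr
        rwa [hab, one_mul] at e)
      (by
        have : b * (τ + 3 * s) + a * (τ' + 3 * s) < 1 := by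
          rcases hb0.eq_or_lt with e | e
          · rw [← e] at hab ⊢
            rw [zero_add] at hab
            rw [hab]
            linarith
          · nlinarith
        have e : b * (τ + 3 * s) + a * (τ' + 3 * s) = τ₁ + (b + a) * (3 * s) := by
          rw [hτ₁]; ring
        rw [e, hab] at this
        linarith)
      (by positivity) d2 d4
      (fun y u hy hu => hV.interior_doubling hσ0 hσ1 hs hτ hp hτ1 h hq
        (by
          have := norm_add_le (y - p₁) (p₁ - p)
          rw [sub_add_sub_cancel] at this
          linarith)
        (by
          have := abs_add_le (u - τ₁) (τ₁ - τ)
          rw [sub_add_sub_cancel] at this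
          linarith)) x t hx ht
    rw [pow_succ]
    linarith

/-- Harnack chain of growing cylinders. -/
lemma IsRobinSolution.interior_growth (hV : IsRobinSolution σ M V) (hσ0 : 0 < σ) (hσ1 : σ < 1)
    {p : EuclideanSpace ℝ (Fin n)} {τ s q : ℝ} (hs : 0 < s) (hτ : 4 * s ≤ τ) (hq : 0 ≤ q)
    (h : ∀ x t, ‖x - p‖ ≤ s → |t - τ| ≤ s → q ≤ V (x, t)) (k : ℕ) :
    ‖p‖ + 3 * ((6 / 5) ^ k * s) < 1 → τ + 7 * ((6 / 5) ^ k * s) < 1 →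
      ∀ x t, ‖x - p‖ ≤ (6 / 5) ^ k * s → |t - (τ + 4 * ((6 / 5) ^ k * s - s))| ≤ (6 / 5) ^ k * s →
        doublingConst n ^ k * q ≤ V (x, t) := by
  have hc0 := doublingConst_pos n
  induction k with
  | zero =>
    intro _ _ x t hx ht
    simp only [pow_zero, one_mul, sub_self, mul_zero, add_zero] at hx ht
    simpa using h x t hx ht
  | succ k ih =>
    intro h1 h2 x t hx ht
    have e : (6 / 5 : ℝ) ^ (k + 1) * s = 6 / 5 * ((6 / 5) ^ k * s) := by rw [pow_succ]; ring
    have hsk : s ≤ (6 / 5) ^ k * s :=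
      le_mul_of_one_le_left hs.le (one_le_pow₀ (by norm_num))
    rw [e] at h1 h2 hx ht
    set z := (6 / 5 : ℝ) ^ k * s with hz
    have hz0 : 0 < z := by positivity
    have := hV.interior_doubling hσ0 hσ1 hz0 (τ := τ + 4 * (z - s)) (by linarith) (by linarith)
      (by linarith) (ih (by linarith) (by linarith)) (by positivity) (x := x) (t := t)
      (by linarith) (by
        rw [abs_le] at ht ⊢
        constructor <;> linarith)
    rw [pow_succ]
    linarith

lemma exists_pos_lt_of_tendsto_zero {f : ℝ → ℝ} (hf : Tendsto f (𝓝[>] 0) (𝓝 0)) {ε b : ℝ}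
    (hε : 0 < ε) (hb : 0 < b) : ∃ x, 0 < x ∧ x < b ∧ f x < ε := by
  obtain ⟨x, h1, h2⟩ := ((hf.eventually (gt_mem_nhds hε)).and (Ioo_mem_nhdsGT hb)).exists
  exact ⟨x, h2.1, h2.2, h1⟩

/-- A lower bound on an interior cylinder of size `s` propagates to `Q_{1/2}` up to the boundary,
with a polynomial loss in `s`. -/
lemma exists_lower_bound (n : ℕ) (hσ0 : 0 < σ) (hσ1 : σ < 1) (hM : 0 < M) {γ : ℕ}
    (hγ : (5 / 6 : ℝ) ^ γ ≤ doublingConst n) :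
    ∃ c > 0, ∀ V : Pt n → ℝ, IsRobinSolution σ M V →
      ∀ (p : EuclideanSpace ℝ (Fin n)) (τ s q : ℝ), 0 < s → s ≤ 1 / 48 → 4 * s ≤ τ → τ ≤ 3 / 4 →
        ‖p‖ ≤ 3 / 4 → 0 ≤ q → (∀ x t, ‖x - p‖ ≤ s → |t - τ| ≤ s → q ≤ V (x, t)) →
        ∀ y u, ‖y‖ ≤ 1 / 2 → 0 ≤ u → u ≤ 1 / 2 → c * (s ^ γ * q) ≤ V (y, u) := by
  have hc0 := doublingConst_pos n
  have hσ2 : 0 < 2 - 2 * σ := by linarith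
  obtain ⟨h, hh0, hh1, hh2⟩ := exists_pos_lt_of_tendsto_zero
    (f := fun h => (16 * n + 1) / (2 - 2 * σ) * h ^ (2 : ℝ) + M / (8 * σ) * h ^ (2 * σ))
    (by
      simpa using ((tendsto_rpow_nhdsGT_zero (two_pos : (0 : ℝ) < 2)).const_mul
        ((16 * n + 1) / (2 - 2 * σ))).add ((tendsto_rpow_nhdsGT_zero
          (by positivity : 0 < 2 * σ)).const_mul (M / (8 * σ))))
    (show (0 : ℝ) < 1 / 4 by norm_num) (show (0 : ℝ) < 1 / 12 by norm_num)
  rw [Real.rpow_two] at hh2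
  have hpos1 : 0 ≤ (16 * n + 1) / (2 - 2 * σ) * h ^ 2 := by positivity
  have hpos2 : 0 ≤ M / (8 * σ) * h ^ (2 * σ) := by positivity
  obtain ⟨N, hN⟩ := exists_nat_ge (2 / (h / 4))
  rw [div_le_iff₀ (by positivity)] at hN
  refine ⟨doublingConst n ^ N / 4, by positivity, ?_⟩
  intro V hV p τ s q hs hs1 hτ hτ1 hp hq hseed y u hy hu0 hu1
  obtain ⟨k, hk1, hk2⟩ := exists_nat_pow_near (x := 1 / (40 * s)) (y := (6 / 5 : ℝ))
    (by rw [le_div_iff₀ (by positivity)]; linarith) (by norm_num)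
  rw [le_div_iff₀ (by positivity)] at hk1
  rw [div_lt_iff₀ (by positivity), pow_succ] at hk2
  have hgrow := hV.interior_growth hσ0 hσ1 hs hτ hq hseed k (by linarith) (by linarith)
  have hlow : s ^ γ * q ≤ doublingConst n ^ k * q := by
    refine mul_le_mul_of_nonneg_right ?_ hq
    have e1 : ((5 / 6 : ℝ) ^ k) ^ γ ≤ doublingConst n ^ k := by
      rw [← pow_mul, mul_comm, pow_mul]
      gcongr
    refine le_trans ?_ e1
    gcongr
    have : (5 / 6 : ℝ) ^ k * (6 / 5) ^ k = 1 := by rw [← mul_pow]; norm_num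
    have h56 : (0 : ℝ) < (5 / 6) ^ k := by positivity
    nlinarith
  have hsk : s ≤ (6 / 5) ^ k * s := le_mul_of_one_le_left hs.le (one_le_pow₀ (by norm_num))
  have hreg : ∀ x t, ‖x‖ ≤ 3 / 4 → h ≤ t → t ≤ 1 / 2 →
      doublingConst n ^ N * (s ^ γ * q) ≤ V (x, t) := by
    intro x t hx ht ht1
    refine hV.interior_chain hσ0 hσ1 (s := h / 4) (by positivity) (p' := x) (τ' := t)
      (by linarith) (by linarith) (by linarith) N p (τ + 4 * ((6 / 5) ^ k * s - s)) (s ^ γ * q)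
      (by linarith) (by linarith) (by linarith) (by positivity) ?_ ?_ ?_ x t (by simp; positivity)
      (by simp; positivity)
    · refine (norm_sub_le _ _).trans ?_
      linarith
    · rw [abs_le]
      constructor <;> linarith
    · intro z v hz hv
      exact hlow.trans (hgrow z v (by linarith) (by linarith))
  have hq' : 0 ≤ doublingConst n ^ N * (s ^ γ * q) := by positivity
  rcases le_total h u with hu | hu
  · have := hreg y u (by linarith) hu hu1
    linarith
  · have := hV.spread_down hσ0 hσ1 hM (y := y) (h := h) (by linarith) (by linarith) (by linarith)
      (by linarith) hq' (fun x hx => hreg x h (norm_le_of_norm_sub_le hx (by linarith)) le_rfl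
        (by linarith)) hu0 hu
    linarith

set_option maxHeartbeats 800000 in
/-- Near a point whose value controls the solution on a surrounding cylinder, the solution is
bounded below on an interior cylinder of comparable size. -/
lemma exists_seed (n : ℕ) (hσ0 : 0 < σ) (hσ1 : σ < 1) (hM : 0 < M) (γ : ℕ) :
    ∃ θ, 0 < θ ∧ θ ≤ 1 / 48 ∧ ∀ V : Pt n → ℝ, IsRobinSolution σ M V →
      ∀ (p : EuclideanSpace ℝ (Fin n)) (T d : ℝ), 0 < d → ‖p‖ + d ≤ 3 / 4 → 0 ≤ T →
        T + d ≤ 3 / 4 → 0 < V (p, T) →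
        (∀ x t, ‖x - p‖ ≤ d / 2 → 0 ≤ t → t ≤ T + d / 2 → V (x, t) ≤ 2 ^ γ * V (p, T)) →
        ∀ x t, ‖x - p‖ ≤ θ * d → |t - (T + 4 * (θ * d))| ≤ θ * d → V (p, T) / 2 ≤ V (x, t) := by
  have hmin : 0 < min σ (1 - σ) := lt_min hσ0 (by linarith)
  have hσm : 0 < σ * min σ (1 - σ) := mul_pos hσ0 hmin
  obtain ⟨δ, hδ0, hδ1, hδ⟩ := exists_pos_lt_of_tendsto_zero
    (f := fun δ => (1 + n * (2 ^ γ / (2 * σ))) * (2 * M + 1) * δ ^ (2 * σ))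
    (by
      simpa using (tendsto_rpow_nhdsGT_zero (by positivity : 0 < 2 * σ)).const_mul
        ((1 + n * (2 ^ γ / (2 * σ))) * (2 * M + 1)))
    (show (0 : ℝ) < 1 / 8 by norm_num) (show (0 : ℝ) < 1 / 4 by norm_num)
  obtain ⟨κ, hκ0, hκ1, hκ⟩ := exists_pos_lt_of_tendsto_zero
    (f := fun κ => n * 2 ^ γ * (sqrtCoeff n σ * κ ^ (1 / 2 : ℝ) + κ ^ (2 : ℝ)))
    (by
      simpa using (((tendsto_rpow_nhdsGT_zero (by norm_num : (0 : ℝ) < 1 / 2)).const_mul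
        (sqrtCoeff n σ)).add (tendsto_rpow_nhdsGT_zero (two_pos : (0 : ℝ) < 2))).const_mul
        (n * 2 ^ γ : ℝ))
    (show (0 : ℝ) < 1 / 8 by norm_num) (show (0 : ℝ) < 1 by norm_num)
  set A : ℝ := max 1 ((2 * n + 1) / (σ * min σ (1 - σ))) with hA
  have hA1 : 1 ≤ A := le_max_left _ _
  have hA2 : 2 * n < A * (σ * min σ (1 - σ)) := by
    have := le_max_right 1 ((2 * n + 1) / (σ * min σ (1 - σ)))
    rw [← hA, div_le_iff₀ hσm] at this
    linarith
  obtain ⟨κ', hκ'0, hκ'1, hκ'⟩ := exists_pos_lt_of_tendsto_zero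
    (f := fun κ => A * 5 ^ σ * κ ^ σ + κ ^ (2 : ℝ))
    (by
      simpa using ((tendsto_rpow_nhdsGT_zero hσ0).const_mul (A * 5 ^ σ)).add
        (tendsto_rpow_nhdsGT_zero (two_pos : (0 : ℝ) < 2)))
    (show (0 : ℝ) < 1 / 3 by norm_num) (show (0 : ℝ) < 1 / 12 by norm_num)
  rw [Real.rpow_two] at hκ hκ'
  have hκδ : κ * δ < δ := by nlinarith
  refine ⟨κ' * (κ * δ), by positivity, by nlinarith, ?_⟩
  intro V hV p T d hd hp hT hTd hpos hle x t hx ht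
  set r := δ * d with hr
  have hr0 : 0 < r := by positivity
  have hr4 : r ≤ d / 4 := by nlinarith
  have hrδ : r ^ (2 * σ) ≤ δ ^ (2 * σ) := by
    refine Real.rpow_le_rpow hr0.le ?_ (by positivity)
    have := norm_nonneg p
    nlinarith
  have hM1 : 0 ≤ n * (2 ^ γ / (2 * σ)) := by positivity
  have hδ2 : (1 + n * (2 ^ γ / (2 * σ))) * (2 * M + 1) * r ^ (2 * σ) < 1 / 8 :=
    lt_of_le_of_lt (mul_le_mul_of_nonneg_left hrδ (by positivity)) hδ
  have hX : 0 ≤ (2 * M + 1) * r ^ (2 * σ) := by positivity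
  have hδ3 : (2 * M + 1) * r ^ (2 * σ) + n * (2 ^ γ / (2 * σ)) * ((2 * M + 1) * r ^ (2 * σ))
      < 1 / 8 := by linarith
  have hY := mul_nonneg hM1 hX
  set S := κ * r with hS
  have hS0 : 0 < S := by positivity
  have hSr : S ≤ r := by nlinarith
  have hdisc : ∀ y, ‖y - p‖ ≤ S → 3 / 4 * V (p, T) ≤ V (y, T) := by
    intro y hy
    have h1 := hV.horizontal_osc hσ0 hσ1 hM hr0 hSr hT (m := 2 ^ γ * V (p, T)) (by positivity)
      (by linarith) (by linarith) (by linarith)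
      (fun z v hz hv hv' => hle z v (by linarith) hv (by linarith)) hy
    have h2 : n * 2 ^ γ * oscBound n σ M r S ≤ 1 / 4 := by
      have e : S / r = κ := by rw [hS]; field_simp
      rw [oscBound, e]
      have e2 : n * 2 ^ γ * ((2 * M + 1) * r ^ (2 * σ) / (2 * σ))
          = n * (2 ^ γ / (2 * σ)) * ((2 * M + 1) * r ^ (2 * σ)) := by ring
      rw [mul_add, e2]
      linarith
    have h3 := mul_le_mul_of_nonneg_right h2 hpos.le
    linarith
  have hθ : κ' * (κ * δ) * d = κ' * S := by rw [hS, hr]; ring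
  rw [hθ] at hx ht
  rw [abs_le] at ht
  have hκS : κ' * S < S / 12 := by nlinarith
  have hup := hV.spread_up hσ0 hσ1 (p := p) (T := T) (S := S) hS0 (by linarith) hT (by linarith)
    hA1 hA2 (by positivity) hdisc (x := x) (t := t) (by linarith)
    (by
      have : 0 < κ' * S := by positivity
      linarith) (by linarith)
  have e1 : ((t - T) / S) ^ σ ≤ 5 ^ σ * κ' ^ σ := by
    rw [← Real.mul_rpow (by norm_num) hκ'0.le]
    have : 0 < κ' * S := by positivity
    refine Real.rpow_le_rpow (div_nonneg (by linarith) hS0.le) ?_ hσ0.le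
    rw [div_le_iff₀ hS0]
    linarith
  have e2 : (‖x - p‖ / S) ^ 2 ≤ κ' ^ 2 := by
    gcongr
    rwa [div_le_iff₀ hS0]
  have e3 : 2 / 3 ≤ 1 - A * ((t - T) / S) ^ σ - (‖x - p‖ / S) ^ 2 := by
    have := mul_le_mul_of_nonneg_left e1 (by linarith : 0 ≤ A)
    linarith
  have e4 := mul_le_mul_of_nonneg_left e3 (by positivity : 0 ≤ 3 / 4 * V (p, T))
  linarith

/-- Harnack inequality for nonnegative solutions with a homogeneous Robin-type bound. -/
theorem IsRobinSolution.exists_harnack (n : ℕ) (hσ0 : 0 < σ) (hσ1 : σ < 1) (hM : 0 < M) :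
    ∃ C > 0, ∀ V : Pt n → ℝ, IsRobinSolution σ M V → ∀ x t y u, ‖x‖ ≤ 1 / 2 → 0 ≤ t → t ≤ 1 / 2 →
      ‖y‖ ≤ 1 / 2 → 0 ≤ u → u ≤ 1 / 2 → V (x, t) ≤ C * V (y, u) := by
  obtain ⟨γ, hγ1, hγ⟩ : ∃ γ : ℕ, γ ≠ 0 ∧ (5 / 6 : ℝ) ^ γ ≤ doublingConst n := by
    obtain ⟨γ, hγ⟩ := exists_pow_lt_of_lt_one (doublingConst_pos n) (by norm_num : (5 / 6 : ℝ) < 1)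
    exact ⟨γ + 1, by omega, (pow_le_pow_of_le_one (by norm_num) (by norm_num)
      (Nat.le_succ γ)).trans hγ.le⟩
  obtain ⟨c, hc, hlower⟩ := exists_lower_bound n hσ0 hσ1 hM hγ
  obtain ⟨θ, hθ0, hθ1, hseed⟩ := exists_seed n hσ0 hσ1 hM γ
  set C : ℝ := c * θ ^ γ / 2 * (1 / 4) ^ γ with hC
  have hC0 : 0 < C := by positivity
  refine ⟨C⁻¹, by positivity, ?_⟩
  intro V hV x t y u hx ht0 ht1 hy hu0 hu1
  rw [← div_eq_inv_mul, le_div_iff₀ hC0]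
  have hVy : 0 ≤ V (y, u) := hV.nonneg _ _ (by linarith) hu0 (by linarith)
  set f : Pt n → ℝ := fun Y => (3 / 4 - max ‖Y.1‖ Y.2) ^ γ * V Y with hf
  have hfc : ContinuousOn f (closedBall 0 (3 / 4) ×ˢ Icc 0 (3 / 4)) :=
    (Continuous.continuousOn (by fun_prop)).mul
      (hV.continuousOn_cylinder (by norm_num) le_rfl (by norm_num))
  obtain ⟨⟨p, T⟩, ⟨hp, hT⟩, hmax⟩ := (isCompact_cylinder _ _ _ _).exists_isMaxOn
    ⟨((0 : EuclideanSpace ℝ (Fin n)), (0 : ℝ)), by constructor <;> norm_num⟩ hfc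
  simp only [mem_closedBall_zero_iff, mem_Icc] at hp hT
  set d := 3 / 4 - max ‖p‖ T with hd
  have hfmax : ∀ z v, ‖z‖ ≤ 3 / 4 → 0 ≤ v → v ≤ 3 / 4 →
      (3 / 4 - max ‖z‖ v) ^ γ * V (z, v) ≤ d ^ γ * V (p, T) := fun z v hz hv hv' =>
    hmax (a := (z, v)) ⟨by simpa using hz, hv, hv'⟩
  have hVx : 0 ≤ V (x, t) := hV.nonneg _ _ (by linarith) ht0 (by linarith)
  have hbound : (1 / 4) ^ γ * V (x, t) ≤ d ^ γ * V (p, T) := by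
    refine le_trans ?_ (hfmax x t (by linarith) ht0 (by linarith))
    gcongr
    have := max_le hx ht1
    linarith
  have hVp : 0 ≤ V (p, T) := hV.nonneg _ _ (by linarith) hT.1 (by linarith)
  have hd0 : 0 ≤ d := sub_nonneg.2 (max_le hp hT.2)
  have hkey : c * θ ^ γ / 2 * (d ^ γ * V (p, T)) ≤ V (y, u) := by
    rcases (mul_nonneg (pow_nonneg hd0 γ) hVp).eq_or_lt with h0 | h0
    · rw [← h0, mul_zero]
      exact hVy
    have hVpos : 0 < V (p, T) := pos_of_mul_pos_right h0 (by positivity)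
    have hdpos : 0 < d := by
      refine lt_of_le_of_ne hd0 fun hcon => ?_
      rw [← hcon, zero_pow hγ1, zero_mul] at h0
      exact lt_irrefl _ h0
    have hpd : ‖p‖ + d ≤ 3 / 4 := by
      have := le_max_left ‖p‖ T
      linarith
    have hTd : T + d ≤ 3 / 4 := by
      have := le_max_right ‖p‖ T
      linarith
    have hdle : d ≤ 1 := by linarith [norm_nonneg p]
    have hs := hseed V hV p T d hdpos hpd hT.1 hTd hVpos (by
      intro z v hz hv hv'
      have hz' : ‖z‖ ≤ ‖p‖ + d / 2 := norm_le_of_norm_sub_le hz le_rfl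
      have h1 := hfmax z v (by linarith) hv (by linarith)
      have hVz : 0 ≤ V (z, v) := hV.nonneg _ _ (by linarith) hv (by linarith)
      have h2 : (d / 2) ^ γ * V (z, v) ≤ (3 / 4 - max ‖z‖ v) ^ γ * V (z, v) := by
        gcongr
        have : max ‖z‖ v ≤ 3 / 4 - d / 2 := max_le (by linarith) (by linarith)
        linarith
      have h3 : (d / 2) ^ γ * V (z, v) ≤ (d / 2) ^ γ * (2 ^ γ * V (p, T)) := by
        rw [← mul_assoc, ← mul_pow, div_mul_cancel₀ d two_ne_zero]
        linarith
      exact le_of_mul_le_mul_left h3 (by positivity))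
    have := hlower V hV p (T + 4 * (θ * d)) (θ * d) (V (p, T) / 2) (by positivity)
      (by nlinarith) (by linarith [hT.1]) (by nlinarith) (by linarith) (by positivity) hs y u hy
      hu0 hu1
    rw [mul_pow] at this
    linarith
  have := mul_le_mul_of_nonneg_left hbound (by positivity : 0 ≤ c * θ ^ γ / 2)
  rw [hC]
  linarith

end Chains

section Reduction

variable {n : ℕ} {σ : ℝ} {U : Pt n → ℝ}

lemma isOpen_Q (n : ℕ) (R : ℝ) : IsOpen (Q n R) := isOpen_ball.prod isOpen_Ioo

lemma closure_Q (n : ℕ) {R : ℝ} (hR : 0 < R) : closure (Q n R) = closedBall 0 R ×ˢ Icc 0 R := by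
  rw [Q, closure_prod_eq, closure_ball _ hR.ne', closure_Ioo hR.ne]

/-- Second derivatives of a `C²` function along a line. -/
lemma hasSecondDerivAt_line (hU : ContDiffOn ℝ 2 U (Q n 1)) {P v : Pt n} {s : ℝ}
    (hX : P + s • v ∈ Q n 1) :
    HasSecondDerivAt (fun τ : ℝ => U (P + τ • v)) s (fderiv ℝ U (P + s • v) v)
      (iteratedFDeriv ℝ 2 U (P + s • v) ![v, v]) := by
  have hline : ∀ τ : ℝ, HasDerivAt (fun τ : ℝ => P + τ • v) v τ := fun τ => by
    simpa using ((hasDerivAt_id τ).smul_const v).const_add P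
  refine ⟨fun τ => fderiv ℝ U (P + τ • v) v, ?_, rfl, ?_⟩
  · have hnhds : ∀ᶠ τ in 𝓝 s, P + τ • v ∈ Q n 1 :=
      (hline s).continuousAt.eventually ((isOpen_Q n 1).mem_nhds hX)
    filter_upwards [hnhds] with τ hτ
    have hd : DifferentiableAt ℝ U (P + τ • v) :=
      (hU.contDiffAt ((isOpen_Q n 1).mem_nhds hτ)).differentiableAt (by norm_num)
    exact hd.hasFDerivAt.comp_hasDerivAt τ (hline τ)
  · have hd : DifferentiableAt ℝ (fderiv ℝ U) (P + s • v) :=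
      ((hU.contDiffAt ((isOpen_Q n 1).mem_nhds hX)).fderiv_right (m := 1)
        (by norm_num)).differentiableAt (by norm_num)
    have h1 := hd.hasFDerivAt.comp_hasDerivAt s (hline s)
    have h2 := h1.clm_apply (hasDerivAt_const s v)
    rw [iteratedFDeriv_two_apply]
    simpa using h2

lemma hasExtOp_of_equation (hU : ContDiffOn ℝ 2 U (Q n 1)) {X : Pt n} (hX : X ∈ Q n 1)
    (heq : X.2 ^ (1 - 2 * σ) * lap n U X
      + (1 - 2 * σ) * X.2 ^ (-(2 * σ)) * fderiv ℝ U X (0, 1) = 0) : HasExtOp σ U X 0 := by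
  have ht : 0 < X.2 := hX.2.1
  refine ⟨fun i => fderiv ℝ U X (EuclideanSpace.single i 1, 0),
    fun i => iteratedFDeriv ℝ 2 U X
      ![(EuclideanSpace.single i (1 : ℝ), (0 : ℝ)), (EuclideanSpace.single i (1 : ℝ), (0 : ℝ))],
    fderiv ℝ U X (0, 1), iteratedFDeriv ℝ 2 U X
      ![((0 : EuclideanSpace ℝ (Fin n)), (1 : ℝ)), ((0 : EuclideanSpace ℝ (Fin n)), (1 : ℝ))],
    fun i => ?_, ?_, ?_⟩
  · have := hasSecondDerivAt_line hU (P := X) (v := (EuclideanSpace.single i (1 : ℝ), (0 : ℝ)))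
      (s := 0) (by simpa using hX)
    simp only [zero_smul, add_zero] at this
    refine this.congr_of_eventuallyEq (Eventually.of_forall fun τ => ?_)
    simp only
    congr 1
    ext <;> simp
  · have e : (X.1, (0 : ℝ)) + X.2 • ((0 : EuclideanSpace ℝ (Fin n)), (1 : ℝ)) = X := by
      ext <;> simp
    have := hasSecondDerivAt_line hU (P := (X.1, (0 : ℝ)))
      (v := ((0 : EuclideanSpace ℝ (Fin n)), (1 : ℝ))) (s := X.2) (by rwa [e])
    rw [e] at this
    refine this.congr_of_eventuallyEq (Eventually.of_forall fun τ => ?_)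
    simp only
    congr 1
    ext <;> simp
  · have hpow : X.2 ^ (-(2 * σ)) = X.2 ^ (1 - 2 * σ) / X.2 := by
      rw [show -(2 * σ) = (1 - 2 * σ) - 1 by ring, Real.rpow_sub ht, Real.rpow_one]
    have hp0 : X.2 ^ (1 - 2 * σ) ≠ 0 := (Real.rpow_pos_of_pos ht _).ne'
    rw [hpow] at heq
    have : X.2 ^ (1 - 2 * σ) *
        (lap n U X + (1 - 2 * σ) / X.2 * fderiv ℝ U X (0, 1)) = 0 := by
      rw [← heq]; ring
    exact ((mul_eq_zero.1 this).resolve_left hp0).symm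

lemma hasFlux_of_tendsto (hU : ContDiffOn ℝ 2 U (Q n 1)) {x : EuclideanSpace ℝ (Fin n)}
    (hx : ‖x‖ < 1) {ℓ : ℝ}
    (h : Tendsto (fun t : ℝ => t ^ (1 - 2 * σ) * fderiv ℝ U (x, t) (0, 1)) (𝓝[>] 0) (𝓝 ℓ)) :
    HasFlux σ U x ℓ := by
  refine ⟨fun t => fderiv ℝ U (x, t) (0, 1), ?_, h⟩
  filter_upwards [Ioo_mem_nhdsGT (zero_lt_one' ℝ)] with t ht
  have e : (x, (0 : ℝ)) + t • ((0 : EuclideanSpace ℝ (Fin n)), (1 : ℝ)) = (x, t) := by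
    ext <;> simp
  have := (hasSecondDerivAt_line hU (P := (x, (0 : ℝ)))
    (v := ((0 : EuclideanSpace ℝ (Fin n)), (1 : ℝ))) (s := t)
    (by rw [e]; exact ⟨by simpa using hx, ht⟩)).hasDerivAt
  rw [e] at this
  refine this.congr_of_eventuallyEq (Eventually.of_forall fun τ => ?_)
  simp only
  congr 1
  ext <;> simp

end Reduction

end Harnack

/-- **Harnack inequality for the degenerate extension problem** (Theorem 1.2).
If `U ≥ 0` is a `C²(Q₁) ∩ C¹(Q̄₁)` solution of `div(t^{1−2σ}∇U) = 0` in `Q₁`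
with weighted Dirichlet energy finite, whose weighted normal derivative
`−lim_{t→0⁺} t^{1−2σ} ∂ₜU(x,t)` equals `a(x)U(x,0) + b(x)` on `∂'Q₁`, then
`sup_{Q̄_{1/2}} U ≤ C (inf_{Q̄_{1/2}} U + ‖b‖_{L^∞(B₁)})` with `C = C(n, σ, ‖a‖_{L^∞(B₁)})`. -/
theorem harnack_extension
    (n : ℕ) (hn : 2 ≤ n) (σ : ℝ) (hσ0 : 0 < σ) (hσ1 : σ < 1) (Ma : ℝ) :
    ∃ C > 0, ∀ (U : Pt n → ℝ) (a b : EuclideanSpace ℝ (Fin n) → ℝ) (Mb : ℝ),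
      (∀ X ∈ closure (Q n 1), 0 ≤ U X) →
      ContDiffOn ℝ 2 U (Q n 1) →
      ContDiffOn ℝ 1 U (closure (Q n 1)) →
      IntegrableOn (fun X : Pt n =>
        X.2 ^ (1 - 2 * σ) * ((U X) ^ 2 + ‖fderiv ℝ U X‖ ^ 2)) (Q n 1) →
      Measurable a → Measurable b →
      (∀ x ∈ ball (0 : EuclideanSpace ℝ (Fin n)) 1, |a x| ≤ Ma) →
      (∀ x ∈ ball (0 : EuclideanSpace ℝ (Fin n)) 1, |b x| ≤ Mb) →
      -- the equation `div(t^{1−2σ}∇U) = 0`, i.e. `t^{1−2σ}ΔU + (1−2σ)t^{−2σ}∂ₜU = 0`, in `Q₁`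
      (∀ X ∈ Q n 1,
        X.2 ^ (1 - 2 * σ) * lap n U X
          + (1 - 2 * σ) * X.2 ^ (-(2 * σ)) * fderiv ℝ U X (0, 1) = 0) →
      -- the boundary condition `−lim_{t→0⁺} t^{1−2σ} ∂ₜU(x,t) = a(x)U(x,0) + b(x)` on `∂'Q₁`
      (∀ x ∈ ball (0 : EuclideanSpace ℝ (Fin n)) 1,
        Filter.Tendsto (fun t : ℝ => t ^ (1 - 2 * σ) * fderiv ℝ U (x, t) (0, 1))
          (nhdsWithin 0 (Ioi 0)) (nhds (-(a x * U (x, 0) + b x)))) →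
      ∀ X ∈ closure (Q n (1/2)), ∀ Y ∈ closure (Q n (1/2)),
        U X ≤ C * (U Y + Mb) := by
  set M := max Ma 1 with hM
  have hM0 : 0 < M := lt_of_lt_of_le one_pos (le_max_right _ _)
  obtain ⟨C, hC, hmain⟩ := IsRobinSolution.exists_harnack (M := M) n hσ0 hσ1 hM0
  refine ⟨C, hC, ?_⟩
  intro U a b Mb hU0 hU2 hU1 _ _ _ ha hb heq hflux X hX Y hY
  rw [closure_Q n one_pos] at hU0 hU1
  rw [closure_Q n one_half_pos] at hX hY
  have hMb : 0 ≤ Mb := (abs_nonneg _).trans (hb 0 (by simp))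
  have hV : IsRobinSolution σ M (fun Z => U Z + Mb) := by
    refine ⟨?_, hU1.continuousOn.add continuousOn_const, ?_, ?_⟩
    · intro x t hx ht0 ht1
      have := hU0 (x, t) ⟨by simpa using hx, ht0, ht1⟩
      linarith
    · intro Z hZ hZ0 hZ1
      have hZQ : Z ∈ Q n 1 := ⟨by simpa using hZ, hZ0, hZ1⟩
      exact ((hasExtOp_of_equation hU2 hZQ (heq Z hZQ)).add (.const Mb)).congr (fun _ => rfl)
        (by simp)
    · intro x hx
      have hxb : x ∈ ball (0 : EuclideanSpace ℝ (Fin n)) 1 := by simpa using hx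
      refine ⟨_, ?_, (hasFlux_of_tendsto hU2 hx (hflux x hxb)).add
        (HasFlux.of_horizontal fun _ => Mb)⟩
      have hUx := hU0 (x, 0) ⟨by simpa using hx.le, le_rfl, zero_le_one⟩
      have h1 : |a x * U (x, 0)| ≤ M * U (x, 0) := by
        rw [abs_mul, abs_of_nonneg hUx]
        exact mul_le_mul_of_nonneg_right ((ha x hxb).trans (le_max_left _ _)) hUx
      have h2 : Mb ≤ M * Mb := le_mul_of_one_le_left hMb (le_max_right _ _)
      have h3 := abs_add_le (a x * U (x, 0)) (b x)
      have h4 := hb x hxb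
      rw [add_zero, abs_neg]
      linarith
  have := hmain _ hV X.1 X.2 Y.1 Y.2 (by simpa using hX.1) hX.2.1 hX.2.2 (by simpa using hY.1)
    hY.2.1 hY.2.2
  linarith
end
end
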